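/- arXiv:2403.05293 — 10 statements merged into one kernel-verified Lean document; each statement's English description precedes it below -/
import Mathlib

section
/- Let L be the quadratic loss of an overparametrised linear regression with nonempty interpolator set S, let λ > 0, and let θ : ℝ_{≥0} → ℝ^d be a twice continuously differentiable solution of λθ̈_t + θ̇_t + ∇L(θ_t) = 0 with θ(0) = θ₀ and θ̇(0) = θ̇₀. Then θ_t converges as t → ∞, and its limit is the unique minimiser of ‖θ* − (θ₀ + λθ̇₀)‖₂ over θ* ∈ S, i.e., the orthogonal projection of the effective initialisation θ₀ + λθ̇₀ onto the affine set S. -/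
open Real Filter

open scoped RealInnerProductSpace

section helpers

variable {n d : ℕ}

lemma aux_coercive (x : Fin n → EuclideanSpace ℝ (Fin d)) :
    ∃ C : ℝ, 0 < C ∧ ∀ w : EuclideanSpace ℝ (Fin d),
      (∀ v, (∀ i, ⟪x i, v⟫ = 0) → ⟪w, v⟫ = 0) → ‖w‖ ^ 2 ≤ C * ∑ i, ⟪x i, w⟫ ^ 2 := by
  let T : EuclideanSpace ℝ (Fin d) →ₗ[ℝ] EuclideanSpace ℝ (Fin n) :=
    (WithLp.linearEquiv 2 ℝ (Fin n → ℝ)).symm.toLinearMap ∘ₗ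
      LinearMap.pi (fun i => (innerSL ℝ (x i)).toLinearMap)
  have hT : ∀ v i, T v i = ⟪x i, v⟫ := fun v i => rfl
  let K := LinearMap.ker T
  have hK : ∀ v, v ∈ K ↔ ∀ i, ⟪x i, v⟫ = 0 := by
    intro v
    rw [LinearMap.mem_ker]
    constructor
    · intro h i
      rw [← hT, h]; rfl
    · intro h
      ext i
      rw [hT, h]; rfl
  have hker : LinearMap.ker (T.domRestrict Kᗮ) = ⊥ := by
    rw [LinearMap.ker_eq_bot']
    intro m hm
    have h1 : (m : EuclideanSpace ℝ (Fin d)) ∈ K := by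
      rw [LinearMap.mem_ker]; exact hm
    have h2 := m.2 m h1
    exact Subtype.ext (inner_self_eq_zero.mp h2)
  obtain ⟨C, hC, hanti⟩ := LinearMap.exists_antilipschitzWith _ hker
  refine ⟨(C : ℝ) ^ 2, by positivity, fun w hw => ?_⟩
  have hwK : w ∈ Kᗮ := by
    rw [Submodule.mem_orthogonal']
    intro v hv
    exact hw v ((hK v).1 hv)
  have h := hanti.le_mul_dist ⟨w, hwK⟩ 0
  rw [dist_zero_right, map_zero, dist_zero_right] at h
  have h' : ‖w‖ ≤ C * ‖T w‖ := h
  have h2 : ‖T w‖ ^ 2 = ∑ i, ⟪x i, w⟫ ^ 2 := by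
    rw [EuclideanSpace.norm_sq_eq]
    simp [hT]
  rw [← h2, ← mul_pow]
  exact pow_le_pow_left₀ (norm_nonneg _) h' 2

lemma aux_gradient (x : Fin n → EuclideanSpace ℝ (Fin d)) (y : Fin n → ℝ) :
    ∃ c : ℝ, 0 < c ∧ ∀ θ, gradient (fun θ : EuclideanSpace ℝ (Fin d) =>
      (1 / (2 * (n : ℝ))) * ∑ i, (y i - ⟪x i, θ⟫) ^ 2) θ
        = c • ∑ i, (⟪x i, θ⟫ - y i) • x i := by
  rcases Nat.eq_zero_or_pos n with rfl | hn
  · refine ⟨1, one_pos, fun θ => ?_⟩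
    simp
  · have hn' : (0 : ℝ) < n := by exact_mod_cast hn
    refine ⟨1 / n, by positivity, fun θ => ?_⟩
    apply HasGradientAt.gradient
    rw [hasGradientAt_iff_hasFDerivAt]
    have h : HasFDerivAt (fun θ : EuclideanSpace ℝ (Fin d) =>
      (1 / (2 * (n : ℝ))) * ∑ i, (y i - ⟪x i, θ⟫) ^ 2)
      ((1 / (2 * (n : ℝ))) • ∑ i, ((2 * (y i - ⟪x i, θ⟫)) • (-(innerSL ℝ (x i))))) θ := by
      apply HasFDerivAt.const_mul
      apply HasFDerivAt.fun_sum
      intro i _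
      have h1 : HasFDerivAt (fun θ => y i - ⟪x i, θ⟫) (-(innerSL ℝ (x i))) θ :=
        (innerSL ℝ (x i)).hasFDerivAt.const_sub (y i)
      simpa using h1.pow 2
    refine h.congr_fderiv ?_
    ext v
    simp only [InnerProductSpace.toDual_apply_apply, inner_smul_left, sum_inner, Finset.mul_sum,
      _root_.sum_apply, ContinuousLinearMap.smul_apply, ContinuousLinearMap.neg_apply,
      innerSL_apply_apply, smul_eq_mul, conj_trivial]
    apply Finset.sum_congr rfl
    intro i _
    field_simp
    ring

set_option maxHeartbeats 1000000 in
lemma aux_main (x : Fin n → EuclideanSpace ℝ (Fin d)) (c lam : ℝ) (hc : 0 < c) (hlam : 0 < lam)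
    (u u' u'' : ℝ → EuclideanSpace ℝ (Fin d))
    (hu : ∀ t, HasDerivAt u (u' t) t) (hu' : ∀ t, HasDerivAt u' (u'' t) t)
    (hode : ∀ t, 0 ≤ t → lam • u'' t + u' t + c • ∑ i, ⟪x i, u t⟫ • x i = 0)
    (hinit : ∀ v, (∀ i, ⟪x i, v⟫ = 0) → ⟪u 0 + lam • u' 0, v⟫ = 0) :
    Tendsto u atTop (nhds 0) := by
  have hw : ∀ t, HasDerivAt (fun t => u t + lam • u' t) (u' t + lam • u'' t) t :=
    fun t => (hu t).add ((hu' t).const_smul lam)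
  have hode' : ∀ t, 0 ≤ t → u' t + lam • u'' t = - (c • ∑ i, ⟪x i, u t⟫ • x i) := by
    intro t ht
    rw [eq_neg_iff_add_eq_zero, ← hode t ht]; abel
  have hginner : ∀ t v, ⟪c • ∑ i, ⟪x i, u t⟫ • x i, v⟫ = c * ∑ i, ⟪x i, u t⟫ * ⟪x i, v⟫ := by
    intro t v
    simp [inner_smul_left, sum_inner]
  -- the conserved orthogonality
  have horth : ∀ t, 0 ≤ t → ∀ v, (∀ i, ⟪x i, v⟫ = 0) → ⟪u t + lam • u' t, v⟫ = 0 := by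
    intro t ht v hv
    have hd : ∀ s, HasDerivAt (fun s => ⟪u s + lam • u' s, v⟫) (⟪u' s + lam • u'' s, v⟫) s := by
      intro s
      simpa using (hw s).inner ℝ (hasDerivAt_const s v)
    have := constant_of_has_deriv_right_zero (f := fun s => ⟪u s + lam • u' s, v⟫) (a := 0) (b := t)
      (fun s _ => (hd s).continuousAt.continuousWithinAt)
      (fun s hs => by
        have h := (hd s).hasDerivWithinAt (s := Set.Ici s)
        rw [hode' s hs.1, inner_neg_left, hginner] at h
        simpa [hv] using h) t ⟨ht, le_rfl⟩
    rw [this]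
    exact hinit v hv
  obtain ⟨C, hC, hcoer⟩ := aux_coercive x
  let Q : EuclideanSpace ℝ (Fin d) → ℝ := fun v => ∑ i, ⟪x i, v⟫ ^ 2
  have hQ0 : ∀ v, 0 ≤ Q v := fun v => Finset.sum_nonneg fun i _ => sq_nonneg _
  obtain ⟨M, hM⟩ : ∃ M : ℝ, M = ∑ i, ‖x i‖ ^ 2 := ⟨_, rfl⟩
  have hM0 : 0 ≤ M := hM ▸ Finset.sum_nonneg fun i _ => sq_nonneg _
  have hQM : ∀ v, Q v ≤ M * ‖v‖ ^ 2 := by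
    intro v
    simp only [Q, hM, Finset.sum_mul]
    apply Finset.sum_le_sum
    intro i _
    rw [← mul_pow]
    exact sq_le_sq' (by have := neg_le_of_abs_le (abs_real_inner_le_norm (x i) v); linarith)
      (real_inner_le_norm _ _)
  have hQadd : ∀ a b, Q (a + lam • b) ≤ 2 * Q a + 2 * lam ^ 2 * Q b := by
    intro a b
    simp only [Q, Finset.mul_sum, ← Finset.sum_add_distrib]
    apply Finset.sum_le_sum
    intro i _
    rw [inner_add_right, inner_smul_right]
    nlinarith [sq_nonneg (⟪x i, a⟫ - lam * ⟪x i, b⟫)]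
  let H : ℝ → ℝ := fun t => 1 / 2 * ‖u t + lam • u' t‖ ^ 2 + (lam + 1) / 2 * c * Q (u t)
    + lam / 2 * ‖u' t‖ ^ 2
  have hQd : ∀ t, HasDerivAt (fun t => Q (u t)) (∑ i, 2 * (⟪x i, u t⟫ * ⟪x i, u' t⟫)) t := by
    intro t
    apply HasDerivAt.fun_sum
    intro i _
    have h1 : HasDerivAt (fun t => ⟪x i, u t⟫) ⟪x i, u' t⟫ t := by
      simpa using (hasDerivAt_const t (x i)).inner ℝ (hu t)
    refine (h1.pow 2).congr_deriv ?_
    push_cast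
    ring
  have hHd0 : ∀ t, HasDerivAt H (1 / 2 * (2 * ⟪u t + lam • u' t, u' t + lam • u'' t⟫)
      + (lam + 1) / 2 * c * (∑ i, 2 * (⟪x i, u t⟫ * ⟪x i, u' t⟫))
      + lam / 2 * (2 * ⟪u' t, u'' t⟫)) t := by
    intro t
    exact (((hw t).norm_sq.const_mul _).add ((hQd t).const_mul _)).add ((hu' t).norm_sq.const_mul _)
  have hHd : ∀ t, 0 ≤ t → HasDerivAt H (- ‖u' t‖ ^ 2 - c * Q (u t)) t := by
    intro t ht
    refine (hHd0 t).congr_deriv ?_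
    symm
    have e1 : ⟪u t + lam • u' t, u' t + lam • u'' t⟫
        = - (c * Q (u t)) - lam * (c * ∑ i, ⟪x i, u t⟫ * ⟪x i, u' t⟫) := by
      rw [hode' t ht, inner_neg_right, real_inner_comm, hginner]
      simp only [inner_add_right, inner_smul_right, mul_add, Finset.sum_add_distrib, Q]
      have : ∀ i, ⟪x i, u t⟫ * (lam * ⟪x i, u' t⟫) = lam * (⟪x i, u t⟫ * ⟪x i, u' t⟫) :=
        fun i => by ring
      simp only [this, ← Finset.mul_sum, ← pow_two]
      ring
    have e2 : lam * ⟪u' t, u'' t⟫ = - ‖u' t‖ ^ 2 - c * ∑ i, ⟪x i, u t⟫ * ⟪x i, u' t⟫ := by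
      have : lam • u'' t = - u' t - (c • ∑ i, ⟪x i, u t⟫ • x i) := by
        rw [sub_eq_add_neg, ← hode' t ht]; abel
      rw [← inner_smul_right, this, inner_sub_right, inner_neg_right, real_inner_self_eq_norm_sq,
        real_inner_comm, hginner]
    rw [e1, ← Finset.mul_sum]
    linear_combination -e2
  -- coercivity of the dissipation
  obtain ⟨B, hBdef⟩ : ∃ B : ℝ, B = C / c + C * lam ^ 2 * M + (lam + 1) / 2 + lam / 2 := ⟨_, rfl⟩
  have hB : 0 < B := by rw [hBdef]; positivity
  have hdiss : ∀ t, 0 ≤ t → H t ≤ B * (‖u' t‖ ^ 2 + c * Q (u t)) := by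
    intro t ht
    have h1 := hcoer _ (horth t ht)
    have h2 : ‖u t + lam • u' t‖ ^ 2 ≤
        C * (2 * Q (u t) + 2 * lam ^ 2 * (M * ‖u' t‖ ^ 2)) := by
      refine h1.trans (mul_le_mul_of_nonneg_left ((hQadd _ _).trans ?_) hC.le)
      have := mul_le_mul_of_nonneg_left (hQM (u' t)) (by positivity : 0 ≤ 2 * lam ^ 2)
      linarith
    have hq := hQ0 (u t)
    have hn := sq_nonneg ‖u' t‖
    have e : B * (‖u' t‖ ^ 2 + c * Q (u t)) = C * Q (u t) + C * lam ^ 2 * M * ‖u' t‖ ^ 2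
        + (lam + 1) / 2 * c * Q (u t) + lam / 2 * ‖u' t‖ ^ 2
        + (C / c * ‖u' t‖ ^ 2 + C * lam ^ 2 * M * (c * Q (u t))
          + (lam + 1) / 2 * ‖u' t‖ ^ 2 + lam / 2 * (c * Q (u t))) := by
      rw [hBdef]; field_simp; ring
    have hp : 0 ≤ C / c * ‖u' t‖ ^ 2 + C * lam ^ 2 * M * (c * Q (u t))
          + (lam + 1) / 2 * ‖u' t‖ ^ 2 + lam / 2 * (c * Q (u t)) := by positivity
    rw [e]
    simp only [H]
    linarith
  have hHbound : ∀ t, 0 ≤ t → H t ≤ H 0 * Real.exp (-(t / B)) := by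
    have hd : ∀ t, 0 ≤ t → HasDerivAt (fun t => H t * Real.exp (t / B))
        ((- ‖u' t‖ ^ 2 - c * Q (u t)) * Real.exp (t / B)
          + H t * (Real.exp (t / B) * (1 / B))) t := fun t ht =>
      (hHd t ht).mul ((hasDerivAt_id t).div_const B).exp
    have hanti : AntitoneOn (fun t => H t * Real.exp (t / B)) (Set.Ici 0) := by
      apply antitoneOn_of_hasDerivWithinAt_nonpos (convex_Ici 0)
        (fun t ht => (hd t ht).continuousAt.continuousWithinAt)
        (fun t ht => (hd t (interior_subset ht)).hasDerivWithinAt)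
      intro t ht
      have h1 := hdiss t (interior_subset ht)
      have h2 : H t / B ≤ ‖u' t‖ ^ 2 + c * Q (u t) := by
        rw [div_le_iff₀ hB]; linarith
      have h3 := mul_le_mul_of_nonneg_right h2 (Real.exp_pos (t / B)).le
      have h4 : H t * (Real.exp (t / B) * (1 / B)) = H t / B * Real.exp (t / B) := by ring
      rw [h4]
      linarith
    intro t ht
    have h := hanti (Set.mem_Ici.2 le_rfl) (Set.mem_Ici.2 ht) ht
    simp only [zero_div, Real.exp_zero, mul_one] at h
    rw [Real.exp_neg, ← div_eq_mul_inv, le_div_iff₀ (Real.exp_pos _)]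
    exact h
  have hexp : Tendsto (fun t => H 0 * Real.exp (-(t / B))) atTop (nhds 0) := by
    have h1 : Tendsto (fun t : ℝ => Real.exp (-(t / B))) atTop (nhds 0) :=
      Real.tendsto_exp_neg_atTop_nhds_zero.comp (tendsto_id.atTop_div_const hB)
    simpa using h1.const_mul (H 0)
  have hsq : ∀ t, 0 ≤ t → ‖u t‖ ^ 2 ≤ (4 + 4 * lam) * (H 0 * Real.exp (-(t / B))) := by
    intro t ht
    refine le_trans ?_ (mul_le_mul_of_nonneg_left (hHbound t ht) (by positivity))
    have h1 : ‖u t‖ ≤ ‖u t + lam • u' t‖ + lam * ‖u' t‖ := by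
      have := norm_sub_le (u t + lam • u' t) (lam • u' t)
      rwa [add_sub_cancel_right, norm_smul, Real.norm_of_nonneg hlam.le] at this
    have h2 : ‖u t‖ ^ 2 ≤ 2 * ‖u t + lam • u' t‖ ^ 2 + 2 * lam ^ 2 * ‖u' t‖ ^ 2 := by
      have := pow_le_pow_left₀ (norm_nonneg _) h1 2
      nlinarith [sq_nonneg (‖u t + lam • u' t‖ - lam * ‖u' t‖)]
    have hq := hQ0 (u t)
    have e : (4 + 4 * lam) * H t = 2 * ‖u t + lam • u' t‖ ^ 2 + 2 * lam ^ 2 * ‖u' t‖ ^ 2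
      + (2 * lam * ‖u t + lam • u' t‖ ^ 2 + 2 * lam * ‖u' t‖ ^ 2
        + (4 + 4 * lam) * ((lam + 1) / 2 * c * Q (u t))) := by
      simp only [H]; ring
    have hp : 0 ≤ 2 * lam * ‖u t + lam • u' t‖ ^ 2 + 2 * lam * ‖u' t‖ ^ 2
        + (4 + 4 * lam) * ((lam + 1) / 2 * c * Q (u t)) := by positivity
    linarith
  have hlim : Tendsto (fun t => ‖u t‖ ^ 2) atTop (nhds 0) := by
    refine tendsto_of_tendsto_of_tendsto_of_le_of_le' tendsto_const_nhds
      (by simpa using hexp.const_mul (4 + 4 * lam)) (Eventually.of_forall fun t => sq_nonneg _) ?_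
    filter_upwards [eventually_ge_atTop 0] with t ht using hsq t ht
  rw [tendsto_zero_iff_norm_tendsto_zero]
  have := hlim.sqrt
  simpa [Real.sqrt_sq] using this

end helpers

/-- Momentum gradient flow `λθ̈ + θ̇ + ∇L(θ) = 0` over the quadratic loss of an
overparametrised linear regression (with nonempty interpolator set `S`), initialised at
`θ(0) = θ₀` with `θ̇(0) = θ̇₀`, converges and the limit is the unique minimiser over `S` of
`‖θ* − (θ₀ + λθ̇₀)‖₂`, i.e. the orthogonal projection of the effective initialisation
`θ₀ + λθ̇₀` onto `S`. -/
theorem stmt_3 {n d : ℕ}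
    (x : Fin n → EuclideanSpace ℝ (Fin d)) (y : Fin n → ℝ)
    (L : EuclideanSpace ℝ (Fin d) → ℝ)
    (hL : L = fun θ => (1 / (2 * (n : ℝ))) * ∑ i, (y i - ⟪x i, θ⟫) ^ 2)
    (S : Set (EuclideanSpace ℝ (Fin d)))
    (hS : S = {θ | ∀ i, ⟪x i, θ⟫ = y i})
    (hSne : S.Nonempty)
    (lam : ℝ) (hlam : 0 < lam)
    (θ θ' θ'' : ℝ → EuclideanSpace ℝ (Fin d))
    (hθ' : ∀ t, HasDerivAt θ (θ' t) t)
    (hθ'' : ∀ t, HasDerivAt θ' (θ'' t) t)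
    (hcont : Continuous θ'')
    (hode : ∀ t, 0 ≤ t → lam • θ'' t + θ' t + gradient L (θ t) = 0)
    (θ₀ θ₀' : EuclideanSpace ℝ (Fin d)) (h0 : θ 0 = θ₀) (h0' : θ' 0 = θ₀') :
    ∃ θlim : EuclideanSpace ℝ (Fin d),
      Tendsto θ atTop (nhds θlim) ∧ θlim ∈ S ∧
        ∀ θstar ∈ S, θstar ≠ θlim →
          ‖θlim - (θ₀ + lam • θ₀')‖ < ‖θstar - (θ₀ + lam • θ₀')‖ := by
  subst hL hS
  obtain ⟨s0, hs0⟩ := hSne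
  simp only [Set.mem_setOf_eq] at hs0
  obtain ⟨c, hc, hgrad⟩ := aux_gradient x y
  let K : Submodule ℝ (EuclideanSpace ℝ (Fin d)) :=
    { carrier := {v | ∀ i, ⟪x i, v⟫ = 0}
      add_mem' := by
        intro a b ha hb i
        rw [inner_add_right, ha i, hb i, add_zero]
      zero_mem' := by
        intro i
        exact inner_zero_right _
      smul_mem' := by
        intro r a ha i
        rw [inner_smul_right, ha i, mul_zero] }
  set z := θ₀ + lam • θ₀' with hz
  set p := s0 + K.starProjection (z - s0) with hp
  have hprojK : K.starProjection (z - s0) ∈ K := Submodule.starProjection_apply_mem K _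
  have hpS : ∀ i, ⟪x i, p⟫ = y i := by
    intro i
    rw [hp, inner_add_right, hs0 i, hprojK i, add_zero]
  have hzp : ∀ v, v ∈ K → ⟪z - p, v⟫ = 0 := by
    intro v hv
    have : z - p = (z - s0) - K.starProjection (z - s0) := by rw [hp]; abel
    rw [this]
    exact Submodule.starProjection_inner_eq_zero _ v hv
  refine ⟨p, ?_, hpS, ?_⟩
  · have h := aux_main x c lam hc hlam (fun t => θ t - p) θ' θ''
      (fun t => (hθ' t).sub_const p) hθ'' ?_ ?_
    · simpa using h.add_const p
    · intro t ht
      rw [← hode t ht, hgrad]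
      simp only [inner_sub_right, hpS]
    · intro v hv
      have := hzp v hv
      rw [h0, h0', ← this, hz]
      congr 1
      abel
  · intro q hq hne
    have hqp : q - p ∈ K := by
      intro i
      rw [inner_sub_right, hpS i, hq i, sub_self]
    have h1 : ‖q - z‖ ^ 2 = ‖q - p‖ ^ 2 + ‖p - z‖ ^ 2 := by
      have e : q - z = (q - p) - (z - p) := by abel
      rw [e, norm_sub_sq_real, real_inner_comm, hzp _ hqp, norm_sub_rev p z]
      ring
    have h2 : 0 < ‖q - p‖ := norm_pos_iff.2 (sub_ne_zero.2 hne)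
    apply lt_of_pow_lt_pow_left₀ 2 (norm_nonneg _)
    rw [h1]
    have : 0 < ‖q - p‖ ^ 2 := by positivity
    linarith
end

section
/- Consider momentum gradient flow on the 2-layer diagonal linear network with parameter λ > 0 and zero initial velocities u̇_0 = v̇_0 = 0. Then for all t ≥ 0, coordinatewise: u̇_t ⊙ u_t − v̇_t ⊙ v_t = ∫₀^t (u̇_s² − v̇_s²) e^{−(t−s)/λ} ds, and u_t² − v_t² = (u₀² − v₀²) + 2λ ∫₀^t (u̇_s² − v̇_s²)(1 − e^{−(t−s)/λ}) ds. -/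
open Real Filter intervalIntegral

open scoped RealInnerProductSpace

/-- For momentum gradient flow on the 2-layer diagonal linear network with
parameter `λ > 0` and zero initial velocities, for all `t ≥ 0`, coordinatewise,
`u̇_t⊙u_t − v̇_t⊙v_t = ∫₀^t (u̇_s² − v̇_s²) e^{−(t−s)/λ} ds` and
`u_t² − v_t² = (u₀² − v₀²) + 2λ∫₀^t (u̇_s² − v̇_s²)(1 − e^{−(t−s)/λ}) ds`. -/
theorem stmt_5 {n d : ℕ}
    (x : Fin n → EuclideanSpace ℝ (Fin d)) (y : Fin n → ℝ)
    (L : EuclideanSpace ℝ (Fin d) → ℝ)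
    (hL : L = fun θ => (1 / (2 * (n : ℝ))) * ∑ i, (y i - ⟪x i, θ⟫) ^ 2)
    (lam : ℝ) (hlam : 0 < lam)
    (u v u' v' u'' v'' : ℝ → EuclideanSpace ℝ (Fin d))
    (hu' : ∀ t, HasDerivAt u (u' t) t) (hv' : ∀ t, HasDerivAt v (v' t) t)
    (hu'' : ∀ t, HasDerivAt u' (u'' t) t) (hv'' : ∀ t, HasDerivAt v' (v'' t) t)
    (hcu : Continuous u'') (hcv : Continuous v'')
    (θ : ℝ → EuclideanSpace ℝ (Fin d)) (hθ : ∀ t i, θ t i = u t i * v t i)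
    (hodeu : ∀ t, 0 ≤ t → ∀ i, lam * u'' t i + u' t i + gradient L (θ t) i * v t i = 0)
    (hodev : ∀ t, 0 ≤ t → ∀ i, lam * v'' t i + v' t i + gradient L (θ t) i * u t i = 0)
    (hu0 : u' 0 = 0) (hv0 : v' 0 = 0) :
    ∀ t, 0 ≤ t → ∀ i,
      (u' t i * u t i - v' t i * v t i =
          ∫ s in (0 : ℝ)..t, (u' s i ^ 2 - v' s i ^ 2) * Real.exp (-(t - s) / lam)) ∧
        (u t i ^ 2 - v t i ^ 2 =
          (u 0 i ^ 2 - v 0 i ^ 2) +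
            2 * lam *
              ∫ s in (0 : ℝ)..t,
                (u' s i ^ 2 - v' s i ^ 2) * (1 - Real.exp (-(t - s) / lam))) := by
  intro t ht i
  have co : ∀ (f : ℝ → EuclideanSpace ℝ (Fin d)) (f' : EuclideanSpace ℝ (Fin d)) (s : ℝ),
      HasDerivAt f f' s → HasDerivAt (fun s => f s i) (f' i) s := by
    intro f f' s h
    exact ((EuclideanSpace.proj (𝕜 := ℝ) i).hasFDerivAt.comp_hasDerivAt s h)
  have a1 := fun s => co u _ s (hu' s)
  have b1 := fun s => co v _ s (hv' s)
  have a2 := fun s => co u' _ s (hu'' s)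
  have b2 := fun s => co v' _ s (hv'' s)
  have ca : Continuous fun s => u' s i := continuous_iff_continuousAt.2 fun s => (a2 s).continuousAt
  have cb : Continuous fun s => v' s i := continuous_iff_continuousAt.2 fun s => (b2 s).continuousAt
  have hlne : lam ≠ 0 := hlam.ne'
  have key : ∀ s, 0 ≤ s → u'' s i * u s i - v'' s i * v s i
      = -(u' s i * u s i - v' s i * v s i) / lam := by
    intro s hs
    rw [eq_div_iff hlne]
    linear_combination u s i * hodeu s hs i - v s i * hodev s hs i
  have hE : ∀ s, HasDerivAt (fun s => Real.exp (-(t - s) / lam))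
      (Real.exp (-(t - s) / lam) * (1 / lam)) s := by
    intro s
    have h := ((((hasDerivAt_id s).const_sub t).neg).div_const lam).exp
    simpa using h
  have hA : ∀ s, 0 ≤ s → HasDerivAt (fun s => u' s i * u s i - v' s i * v s i)
      (u' s i ^ 2 - v' s i ^ 2 - (u' s i * u s i - v' s i * v s i) / lam) s := by
    intro s hs
    refine (((a2 s).mul (a1 s)).sub ((b2 s).mul (b1 s))).congr_deriv ?_
    linear_combination key s hs
  have hF : ∀ s, 0 ≤ s → HasDerivAt
      (fun s => (u' s i * u s i - v' s i * v s i) * Real.exp (-(t - s) / lam))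
      ((u' s i ^ 2 - v' s i ^ 2) * Real.exp (-(t - s) / lam)) s := by
    intro s hs
    refine ((hA s hs).mul (hE s)).congr_deriv ?_
    ring
  have hH : ∀ s, 0 ≤ s → HasDerivAt
      (fun s => (u' s i * u s i - v' s i * v s i) + (u s i ^ 2 - v s i ^ 2) / (2 * lam)
        - (u' s i * u s i - v' s i * v s i) * Real.exp (-(t - s) / lam))
      ((u' s i ^ 2 - v' s i ^ 2) * (1 - Real.exp (-(t - s) / lam))) s := by
    intro s hs
    refine (((hA s hs).add ((((a1 s).pow 2).sub ((b1 s).pow 2)).div_const (2 * lam))).sub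
      (hF s hs)).congr_deriv ?_
    field_simp
    ring
  have hq : Continuous fun s => u' s i ^ 2 - v' s i ^ 2 := (ca.pow 2).sub (cb.pow 2)
  have cE : Continuous fun s => Real.exp (-(t - s) / lam) :=
    continuous_iff_continuousAt.2 fun s => (hE s).continuousAt
  have hz : ∀ s ∈ Set.uIcc 0 t, 0 ≤ s := by
    intro s hs
    rw [Set.uIcc_of_le ht] at hs
    exact hs.1
  have u0 : u' 0 i = 0 := by rw [hu0]; rfl
  have v0 : v' 0 i = 0 := by rw [hv0]; rfl
  constructor
  · rw [integral_eq_sub_of_hasDerivAt (fun s hs => hF s (hz s hs))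
      ((hq.mul cE).intervalIntegrable _ _)]
    simp [u0, v0]
  · rw [integral_eq_sub_of_hasDerivAt (fun s hs => hH s (hz s hs))
      ((hq.mul (continuous_const.sub cE)).intervalIntegrable _ _)]
    simp only [u0, v0, sub_self, neg_zero, zero_div, Real.exp_zero]
    field_simp
    ring
end

section
/- Consider momentum gradient flow on the 2-layer diagonal linear network with parameter λ > 0, zero initial velocities u̇_0 = v̇_0 = 0, initial predictor θ₀ = u₀ ⊙ v₀ = 0 (so L(θ₀) = ‖y‖₂²/(2n)), and initial balancedness Δ₀ = |u₀² − v₀²| with strictly positive coordinates. If λ‖y‖₂² ≤ n · min_{1≤i≤d} Δ_{0,i}, then the balancedness never vanishes: Δ_{t,i} > 0 for every t ∈ [0, ∞) and every coordinate i; moreover, if (u_t, v_t) converges as t → ∞, then the limit balancedness also has strictly positive coordinates. -/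
open Real Filter

open scoped RealInnerProductSpace

lemma aux_mono (f f' : ℝ → ℝ) (c : ℝ) (hf : ∀ t, HasDerivAt f (f' t) t)
    (h : ∀ t, c ≤ t → 0 ≤ f' t) (s t : ℝ) (hs : c ≤ s) (hst : s ≤ t) : f s ≤ f t := by
  have : MonotoneOn f (Set.Ici c) := by
    apply monotoneOn_of_deriv_nonneg (convex_Ici c)
    · exact fun x _ => (hf x).continuousAt.continuousWithinAt
    · exact fun x _ => (hf x).differentiableAt.differentiableWithinAt
    · intro x hx
      rw [interior_Ici] at hx
      rw [(hf x).deriv]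
      exact h x (le_of_lt hx)
  exact this hs (hs.trans hst) hst

lemma aux_const (f f' : ℝ → ℝ) (c : ℝ) (hf : ∀ t, HasDerivAt f (f' t) t)
    (h : ∀ t, c ≤ t → f' t = 0) (t : ℝ) (ht : c ≤ t) : f t = f c := by
  apply le_antisymm
  · have := aux_mono (fun t => - f t) (fun t => - f' t) c (fun t => (hf t).neg)
      (fun t ht => by simp [h t ht]) c t le_rfl ht
    simpa using this
  · exact aux_mono f f' c hf (fun t ht => (h t ht).ge) c t le_rfl ht

/-- If `lam P' + P ≥ c` for times after `s`, and `P s ≥ c` then `P t ≥ c`. -/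
lemma aux_gron (P P' : ℝ → ℝ) (lam s c : ℝ) (hlam : 0 < lam) (hP : ∀ t, HasDerivAt P (P' t) t)
    (h : ∀ t, s ≤ t → c ≤ lam * P' t + P t) (t : ℝ) (ht : s ≤ t) :
    Real.exp (s / lam) * (P s - c) ≤ Real.exp (t / lam) * (P t - c) := by
  have hd : ∀ t, HasDerivAt (fun t => Real.exp (t / lam) * (P t - c))
      (Real.exp (t / lam) * (1 / lam) * (P t - c) + Real.exp (t / lam) * P' t) t := by
    intro t
    exact (((hasDerivAt_id t).div_const lam).exp).mul ((hP t).sub_const c)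
  refine aux_mono _ _ s hd ?_ s t le_rfl ht
  intro t ht
  have h1 := h t ht
  have : Real.exp (t / lam) * (1 / lam) * (P t - c) + Real.exp (t / lam) * P' t
      = Real.exp (t / lam) * (1 / lam) * (lam * P' t + P t - c) := by
    field_simp
    ring
  rw [this]
  have : 0 ≤ lam * P' t + P t - c := by linarith
  positivity

lemma key (a b a' b' a'' b'' g A B : ℝ → ℝ) (lam C : ℝ) (hlam : 0 < lam)
    (ha : ∀ t, HasDerivAt a (a' t) t) (hb : ∀ t, HasDerivAt b (b' t) t)
    (ha' : ∀ t, HasDerivAt a' (a'' t) t) (hb' : ∀ t, HasDerivAt b' (b'' t) t)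
    (hcb : Continuous b'')
    (hA : ∀ t, HasDerivAt A (a' t ^ 2) t) (hB : ∀ t, HasDerivAt B (b' t ^ 2) t)
    (hA0 : A 0 = 0) (hB0 : B 0 = 0)
    (hoa : ∀ t, 0 ≤ t → lam * a'' t + a' t + g t * b t = 0)
    (hob : ∀ t, 0 ≤ t → lam * b'' t + b' t + g t * a t = 0)
    (ha0' : a' 0 = 0) (hb0' : b' 0 = 0) (hab : a 0 * b 0 = 0)
    (hpos : 0 < a 0 ^ 2 - b 0 ^ 2)
    (hC : ∀ t, 0 ≤ t → A t + B t ≤ C) (hsm : 2 * lam * C ≤ a 0 ^ 2 - b 0 ^ 2) :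
    (∀ t, 0 ≤ t → 0 < a t ^ 2 - b t ^ 2) ∧
      ∃ c, 0 < c ∧ ∃ t0, ∀ t, t0 ≤ t → c ≤ a t ^ 2 - b t ^ 2 := by
  have hb0 : b 0 = 0 := by
    rcases mul_eq_zero.1 hab with h | h
    · rw [h] at hpos
      nlinarith [sq_nonneg (b 0)]
    · exact h
  set P : ℝ → ℝ := fun t => a t ^ 2 - b t ^ 2 with hPdef
  set P' : ℝ → ℝ := fun t => 2 * (a t * a' t - b t * b' t) with hP'def
  have hP : ∀ t, HasDerivAt P (P' t) t := by
    intro t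
    have := ((ha t).pow 2).sub ((hb t).pow 2)
    refine this.congr_deriv ?_
    simp only [hP'def]; push_cast; ring
  have hid : ∀ t, 0 ≤ t → lam * P' t + P t - 2 * lam * (A t - B t) = P 0 := by
    intro t ht
    have hd : ∀ t, HasDerivAt (fun t => lam * P' t + P t - 2 * lam * (A t - B t))
        (lam * (2 * ((a' t * a' t + a t * a'' t) - (b' t * b' t + b t * b'' t))) + P' t
          - 2 * lam * (a' t ^ 2 - b' t ^ 2)) t := by
      intro t
      exact (((((ha t).mul (ha' t)).sub ((hb t).mul (hb' t))).const_mul 2).const_mul lam |>.add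
        (hP t)).sub (((hA t).sub (hB t)).const_mul (2 * lam))
    have := aux_const _ _ 0 hd ?_ t ht
    · simp only [this]
      simp [hP'def, ha0', hb0', hA0, hB0]
    · intro t ht
      simp only [hP'def]
      linear_combination 2 * a t * hoa t ht - 2 * b t * hob t ht
  have hAm : ∀ s t, 0 ≤ s → s ≤ t → A s ≤ A t := fun s t hs hst =>
    aux_mono A _ 0 hA (fun t _ => sq_nonneg _) s t hs hst
  have hlow : ∀ t, 0 ≤ t → 4 * lam * A t ≤ lam * P' t + P t := by
    intro t ht
    have h1 := hid t ht
    have h2 := mul_le_mul_of_nonneg_left (hC t ht) (by positivity : 0 ≤ 2 * lam)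
    have h3 : 2 * lam * C ≤ P 0 := hsm
    nlinarith
  have hPpos : ∀ t, 0 ≤ t → 0 < P t := by
    intro t ht
    have h := aux_gron P P' lam 0 0 hlam hP (fun t ht => by
      have h1 := hlow t ht
      have h2 := hAm 0 t le_rfl ht
      rw [hA0] at h2
      have : 0 ≤ 4 * lam * A t := by positivity
      linarith) t ht
    have hp0 : 0 < P 0 := hpos
    simp only [zero_div, Real.exp_zero, sub_zero, one_mul] at h
    by_contra hn
    push Not at hn
    have := mul_nonpos_of_nonneg_of_nonpos (Real.exp_pos (t / lam)).le hn
    linarith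
  refine ⟨hPpos, ?_⟩
  by_cases hex : ∃ t0, 0 ≤ t0 ∧ 0 < A t0
  · obtain ⟨t0, ht0, hA1⟩ := hex
    refine ⟨min (P t0) (4 * lam * A t0), lt_min (hPpos t0 ht0) (by positivity), t0, ?_⟩
    intro t ht
    have h := aux_gron P P' lam t0 (min (P t0) (4 * lam * A t0)) hlam hP (fun t ht => by
      have h1 := hlow t (ht0.trans ht)
      have h2 := mul_le_mul_of_nonneg_left (hAm t0 t ht0 ht) (by positivity : 0 ≤ 4 * lam)
      exact (min_le_right _ _).trans (h2.trans h1)) t ht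
    have h3 : 0 ≤ Real.exp (t0 / lam) * (P t0 - min (P t0) (4 * lam * A t0)) :=
      mul_nonneg (Real.exp_pos _).le (sub_nonneg.2 (min_le_left _ _))
    have h4 := nonneg_of_mul_nonneg_right (h3.trans h) (Real.exp_pos _)
    exact sub_nonneg.1 h4
  · push Not at hex
    have hAz : ∀ t, 0 ≤ t → A t = 0 := fun t ht =>
      le_antisymm (hex t ht) (hA0 ▸ hAm 0 t le_rfl ht)
    have nh : ∀ t : ℝ, 0 < t → ∀ᶠ s in nhds t, 0 < s := fun t ht => lt_mem_nhds ht
    have zero_deriv : ∀ (f : ℝ → ℝ) (f' t : ℝ), HasDerivAt f f' t →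
        (∀ᶠ s in nhds t, f s = 0) → f' = 0 := by
      intro f f' t hf h
      have h1 : HasDerivAt f 0 t := (hasDerivAt_const t (0:ℝ)).congr_of_eventuallyEq h
      exact hf.unique h1
    have ha'z : ∀ t, 0 < t → a' t = 0 := by
      intro t ht
      have := zero_deriv _ _ _ (hA t) ((nh t ht).mono fun s hs => hAz s hs.le)
      exact pow_eq_zero_iff (two_ne_zero) |>.1 this
    have ha''z : ∀ t, 0 < t → a'' t = 0 := fun t ht =>
      zero_deriv _ _ _ (ha' t) ((nh t ht).mono fun s hs => ha'z s hs)
    have hgb : ∀ t, 0 < t → g t * b t = 0 := by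
      intro t ht
      have := hoa t ht.le
      rw [ha'z t ht, ha''z t ht] at this
      linarith
    have hzz : ∀ t, 0 < t → lam * b'' t + b' t = 0 := by
      intro t ht
      by_contra hne
      have hcb' : Continuous b' := continuous_iff_continuousAt.2 fun t => (hb' t).continuousAt
      have hc : Continuous fun t => lam * b'' t + b' t := by fun_prop
      have h1 : ∀ᶠ s in nhds t, lam * b'' s + b' s ≠ 0 := hc.continuousAt.eventually_ne hne
      have h2 : ∀ᶠ s in nhds t, b s = 0 := by
        filter_upwards [h1, nh t ht] with s hs hs0
        by_contra hbs
        have h3 : g s = 0 := (mul_eq_zero.1 (hgb s hs0)).resolve_right hbs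
        have h4 := hob s hs0.le
        rw [h3] at h4
        apply hs
        linarith
      have h3 : ∀ᶠ s in nhds t, b' s = 0 :=
        h2.eventually_nhds.mono fun s hs => zero_deriv _ _ _ (hb s) hs
      have h4 : b'' t = 0 := zero_deriv _ _ _ (hb' t) h3
      apply hne
      rw [h4, h3.self_of_nhds]
      ring
    have hzd : ∀ t, HasDerivAt (fun t => lam * b' t + b t) (lam * b'' t + b' t) t :=
      fun t => ((hb' t).const_mul lam).add (hb t)
    have hzz' : ∀ t, 0 ≤ t → lam * b'' t + b' t = 0 := by
      intro t ht
      rcases ht.eq_or_lt with h | h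
      · subst h
        have hcb' : Continuous b' := continuous_iff_continuousAt.2 fun t => (hb' t).continuousAt
        have hc : Continuous fun t => lam * b'' t + b' t := by fun_prop
        have h1 : Tendsto (fun t => lam * b'' t + b' t) (nhdsWithin 0 (Set.Ioi 0))
            (nhds (lam * b'' 0 + b' 0)) := hc.continuousAt.tendsto.mono_left nhdsWithin_le_nhds
        have h2 : Tendsto (fun t => lam * b'' t + b' t) (nhdsWithin 0 (Set.Ioi 0))
            (nhds 0) := by
          refine tendsto_const_nhds.congr' ?_
          filter_upwards [self_mem_nhdsWithin] with s hs
          exact (hzz s hs).symm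
        exact tendsto_nhds_unique h1 h2
      · exact hzz t h
    have hz : ∀ t, 0 ≤ t → lam * b' t + b t = 0 := by
      intro t ht
      have := aux_const _ _ 0 hzd hzz' t ht
      simp only [this]
      simp [hb0', hb0]
    have hbz : ∀ t, 0 ≤ t → b t = 0 := by
      intro t ht
      have h1 := aux_gron b b' lam 0 0 hlam hb (fun t ht => (hz t ht).ge) t ht
      have h2 := aux_gron (fun t => - b t) (fun t => - b' t) lam 0 0 hlam (fun t => (hb t).neg)
        (fun t ht => by linarith [hz t ht]) t ht
      simp only [hb0, sub_zero, mul_zero, neg_zero] at h1 h2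
      have h3 := nonneg_of_mul_nonneg_right h1 (Real.exp_pos _)
      have h4 := nonneg_of_mul_nonneg_right h2 (Real.exp_pos _)
      linarith
    have haz : ∀ t, 0 ≤ t → a t = a 0 := by
      intro t ht
      refine aux_const a a' 0 ha ?_ t ht
      intro s hs
      rcases hs.eq_or_lt with h | h
      · rw [← h, ha0']
      · exact ha'z s h
    refine ⟨P 0, hpos, 0, ?_⟩
    intro t ht
    simp only [hPdef]
    rw [hbz t ht, haz t ht, hb0]

/-- For MGF on the 2-layer diagonal linear network with `λ > 0`, zero initial
velocities, zero initial predictor `θ₀ = u₀ ⊙ v₀ = 0`, and strictly positive initial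
balancedness `Δ₀`, if `λ‖y‖₂² ≤ n·min_i Δ_{0,i}` (i.e. `λ‖y‖₂² ≤ n·Δ_{0,i}` for every `i`),
then the balancedness never vanishes: `Δ_{t,i} > 0` for all `t ≥ 0` and all `i`; moreover any
limit of `(u_t, v_t)` as `t → ∞` also has strictly positive balancedness. -/
theorem stmt_6 {n d : ℕ}
    (x : Fin n → EuclideanSpace ℝ (Fin d)) (y : EuclideanSpace ℝ (Fin n))
    (L : EuclideanSpace ℝ (Fin d) → ℝ)
    (hL : L = fun θ => (1 / (2 * (n : ℝ))) * ∑ i, (y i - ⟪x i, θ⟫) ^ 2)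
    (lam : ℝ) (hlam : 0 < lam)
    (u v u' v' u'' v'' : ℝ → EuclideanSpace ℝ (Fin d))
    (hu' : ∀ t, HasDerivAt u (u' t) t) (hv' : ∀ t, HasDerivAt v (v' t) t)
    (hu'' : ∀ t, HasDerivAt u' (u'' t) t) (hv'' : ∀ t, HasDerivAt v' (v'' t) t)
    (hcu : Continuous u'') (hcv : Continuous v'')
    (θ : ℝ → EuclideanSpace ℝ (Fin d)) (hθ : ∀ t i, θ t i = u t i * v t i)
    (hodeu : ∀ t, 0 ≤ t → ∀ i, lam * u'' t i + u' t i + gradient L (θ t) i * v t i = 0)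
    (hodev : ∀ t, 0 ≤ t → ∀ i, lam * v'' t i + v' t i + gradient L (θ t) i * u t i = 0)
    (hu0 : u' 0 = 0) (hv0 : v' 0 = 0)
    (hθ0 : θ 0 = 0)
    (hΔ0 : ∀ i, 0 < |u 0 i ^ 2 - v 0 i ^ 2|)
    (hsmall : ∀ i, lam * ‖y‖ ^ 2 ≤ (n : ℝ) * |u 0 i ^ 2 - v 0 i ^ 2|) :
    (∀ t, 0 ≤ t → ∀ i, 0 < |u t i ^ 2 - v t i ^ 2|) ∧
      ∀ ulim vlim : EuclideanSpace ℝ (Fin d),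
        Tendsto u atTop (nhds ulim) → Tendsto v atTop (nhds vlim) →
          ∀ i, 0 < |ulim i ^ 2 - vlim i ^ 2| := by
  have hcoord : ∀ (f : ℝ → EuclideanSpace ℝ (Fin d)) (f' : EuclideanSpace ℝ (Fin d)) (t : ℝ),
      HasDerivAt f f' t → ∀ i, HasDerivAt (fun t => f t i) (f' i) t := by
    intro f f' t hf i
    exact ((EuclideanSpace.proj i : EuclideanSpace ℝ (Fin d) →L[ℝ] ℝ).hasFDerivAt.comp_hasDerivAt
      t hf)
  have hLdiff : Differentiable ℝ L := by
    have hin : ∀ i, Differentiable ℝ (fun z : EuclideanSpace ℝ (Fin d) => ⟪x i, z⟫) :=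
      fun i => (innerSL ℝ (x i)).differentiable
    rw [hL]
    fun_prop
  have hu'c : Continuous u' := continuous_iff_continuousAt.2 fun t => (hu'' t).continuousAt
  have hv'c : Continuous v' := continuous_iff_continuousAt.2 fun t => (hv'' t).continuousAt
  have hθd : ∀ t, HasDerivAt θ
      (WithLp.toLp 2 (fun i => u' t i * v t i + u t i * v' t i)) t := by
    intro t
    have h1 : HasDerivAt (fun t => fun i => u t i * v t i)
        (fun i => u' t i * v t i + u t i * v' t i) t := by
      rw [hasDerivAt_pi]
      intro i
      exact (hcoord u _ t (hu' t) i).mul (hcoord v _ t (hv' t) i)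
    have h2 := ((PiLp.continuousLinearEquiv 2 ℝ (fun _ : Fin d => ℝ)).symm :
      (Fin d → ℝ) →L[ℝ] EuclideanSpace ℝ (Fin d)).hasFDerivAt.comp_hasDerivAt t h1
    have h3 : θ = fun t => WithLp.toLp 2 (fun i => u t i * v t i) := by
      funext t
      ext i
      simp [hθ]
    rw [h3]
    exact h2
  have hLθ : ∀ t, HasDerivAt (fun t => L (θ t))
      (∑ i, gradient L (θ t) i * (u' t i * v t i + u t i * v' t i)) t := by
    intro t
    have h1 := (hLdiff (θ t)).hasGradientAt.hasFDerivAt.comp_hasDerivAt t (hθd t)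
    refine h1.congr_deriv ?_
    rw [InnerProductSpace.toDual_apply_apply, PiLp.inner_apply]
    refine Finset.sum_congr rfl fun i _ => ?_
    simp only [RCLike.inner_apply, conj_trivial]
    ring
  set A : Fin d → ℝ → ℝ := fun i t => ∫ s in (0:ℝ)..t, u' s i ^ 2 with hAdef
  set B : Fin d → ℝ → ℝ := fun i t => ∫ s in (0:ℝ)..t, v' s i ^ 2 with hBdef
  have hA : ∀ i t, HasDerivAt (A i) (u' t i ^ 2) t := by
    intro i t
    have hc : Continuous fun s => u' s i ^ 2 := by fun_prop
    exact intervalIntegral.integral_hasDerivAt_right (hc.intervalIntegrable _ _)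
      (hc.stronglyMeasurableAtFilter _ _) hc.continuousAt
  have hB : ∀ i t, HasDerivAt (B i) (v' t i ^ 2) t := by
    intro i t
    have hc : Continuous fun s => v' s i ^ 2 := by fun_prop
    exact intervalIntegral.integral_hasDerivAt_right (hc.intervalIntegrable _ _)
      (hc.stronglyMeasurableAtFilter _ _) hc.continuousAt
  have hA0 : ∀ i, A i 0 = 0 := by intro i; simp [hAdef]
  have hB0 : ∀ i, B i 0 = 0 := by intro i; simp [hBdef]
  have hA1 : ∀ i t, 0 ≤ t → 0 ≤ A i t := by
    intro i t ht
    have := aux_mono (A i) _ 0 (hA i) (fun t _ => sq_nonneg _) 0 t le_rfl ht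
    rwa [hA0] at this
  have hB1 : ∀ i t, 0 ≤ t → 0 ≤ B i t := by
    intro i t ht
    have := aux_mono (B i) _ 0 (hB i) (fun t _ => sq_nonneg _) 0 t le_rfl ht
    rwa [hB0] at this
  have hLnn : ∀ z, 0 ≤ L z := by
    intro z
    rw [hL]
    positivity
  have hE : ∀ t, 0 ≤ t → (∑ i, (lam / 2 * (u' t i ^ 2 + v' t i ^ 2) + (A i t + B i t))) + L (θ t)
      = L (θ 0) := by
    intro t ht
    have hd : ∀ t, HasDerivAt (fun t =>
        (∑ i, (lam / 2 * (u' t i ^ 2 + v' t i ^ 2) + (A i t + B i t))) + L (θ t))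
        ((∑ i, (lam / 2 * ((2:ℕ) * u' t i ^ (2 - 1) * u'' t i + (2:ℕ) * v' t i ^ (2 - 1) * v'' t i)
          + (u' t i ^ 2 + v' t i ^ 2)))
          + ∑ i, gradient L (θ t) i * (u' t i * v t i + u t i * v' t i)) t := by
      intro t
      refine HasDerivAt.add ?_ (hLθ t)
      refine HasDerivAt.fun_sum fun i _ => ?_
      exact ((((hcoord u' _ t (hu'' t) i).pow 2).add ((hcoord v' _ t (hv'' t) i).pow 2)).const_mul
        _).add ((hA i t).add (hB i t))
    have := aux_const _ _ 0 hd ?_ t ht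
    · simp only [this]
      simp [hu0, hv0, hA0, hB0]
    · intro t ht
      rw [← Finset.sum_add_distrib]
      refine Finset.sum_eq_zero fun i _ => ?_
      push_cast
      linear_combination u' t i * hodeu t ht i + v' t i * hodev t ht i
  have hC : ∀ i t, 0 ≤ t → A i t + B i t ≤ L (θ 0) := by
    intro i t ht
    rw [← hE t ht]
    have h1 := hLnn (θ t)
    have h2 : lam / 2 * (u' t i ^ 2 + v' t i ^ 2) + (A i t + B i t) ≤
        ∑ i, (lam / 2 * (u' t i ^ 2 + v' t i ^ 2) + (A i t + B i t)) := by
      refine Finset.single_le_sum (f := fun i =>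
        lam / 2 * (u' t i ^ 2 + v' t i ^ 2) + (A i t + B i t)) ?_ (Finset.mem_univ i)
      intro j _
      have := hA1 j t ht
      have := hB1 j t ht
      positivity
    have h3 : 0 ≤ lam / 2 * (u' t i ^ 2 + v' t i ^ 2) := by positivity
    linarith
  have hL0 : L (θ 0) = 1 / (2 * (n:ℝ)) * ‖y‖ ^ 2 := by
    rw [hθ0, hL, EuclideanSpace.norm_sq_eq]
    simp
  have hsm : ∀ i, 2 * lam * L (θ 0) ≤ |u 0 i ^ 2 - v 0 i ^ 2| := by
    intro i
    rw [hL0]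
    rcases Nat.eq_zero_or_pos n with h | h
    · have : (n:ℝ) = 0 := by exact_mod_cast h
      rw [this]
      simp
    · have hn : (0:ℝ) < n := by exact_mod_cast h
      have h1 : 2 * lam * (1 / (2 * (n:ℝ)) * ‖y‖ ^ 2) = lam * ‖y‖ ^ 2 / n := by
        field_simp
      rw [h1, div_le_iff₀ hn, mul_comm _ (n:ℝ)]
      exact hsmall i
  have hprod : ∀ i, u 0 i * v 0 i = 0 := by
    intro i
    rw [← hθ, hθ0]
    rfl
  have hmain : ∀ i, (∀ t, 0 ≤ t → 0 < |u t i ^ 2 - v t i ^ 2|) ∧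
      ∃ c, 0 < c ∧ ∃ t0, ∀ t, t0 ≤ t → c ≤ |u t i ^ 2 - v t i ^ 2| := by
    intro i
    have hcui : Continuous fun t => u'' t i := by fun_prop
    have hcvi : Continuous fun t => v'' t i := by fun_prop
    rcases lt_or_gt_of_ne (abs_pos.1 (hΔ0 i)) with hneg | hpos
    · have hs := hsm i
      rw [abs_of_neg hneg] at hs
      obtain ⟨h1, c, hc, t0, h2⟩ := key (fun t => v t i) (fun t => u t i) (fun t => v' t i)
        (fun t => u' t i) (fun t => v'' t i) (fun t => u'' t i) (fun t => gradient L (θ t) i)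
        (B i) (A i) lam (L (θ 0)) hlam (fun t => hcoord v _ t (hv' t) i)
        (fun t => hcoord u _ t (hu' t) i) (fun t => hcoord v' _ t (hv'' t) i)
        (fun t => hcoord u' _ t (hu'' t) i) hcui (hB i) (hA i) (hB0 i) (hA0 i)
        (fun t ht => hodev t ht i) (fun t ht => hodeu t ht i) (by simp [hv0]) (by simp [hu0])
        (by rw [mul_comm]; exact hprod i) (by linarith)
        (fun t ht => by linarith [hC i t ht]) (by linarith)
      refine ⟨fun t ht => ?_, c, hc, t0, fun t ht => ?_⟩
      · rw [abs_sub_comm]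
        exact (h1 t ht).trans_le (le_abs_self _)
      · rw [abs_sub_comm]
        exact (h2 t ht).trans (le_abs_self _)
    · have hs := hsm i
      rw [abs_of_pos hpos] at hs
      obtain ⟨h1, c, hc, t0, h2⟩ := key (fun t => u t i) (fun t => v t i) (fun t => u' t i)
        (fun t => v' t i) (fun t => u'' t i) (fun t => v'' t i) (fun t => gradient L (θ t) i)
        (A i) (B i) lam (L (θ 0)) hlam (fun t => hcoord u _ t (hu' t) i)
        (fun t => hcoord v _ t (hv' t) i) (fun t => hcoord u' _ t (hu'' t) i)
        (fun t => hcoord v' _ t (hv'' t) i) hcvi (hA i) (hB i) (hA0 i) (hB0 i)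
        (fun t ht => hodeu t ht i) (fun t ht => hodev t ht i) (by simp [hu0]) (by simp [hv0])
        (hprod i) hpos (hC i) hs
      refine ⟨fun t ht => ?_, c, hc, t0, fun t ht => ?_⟩
      · exact (h1 t ht).trans_le (le_abs_self _)
      · exact (h2 t ht).trans (le_abs_self _)
  refine ⟨fun t ht i => (hmain i).1 t ht, ?_⟩
  intro ulim vlim hul hvl i
  obtain ⟨c, hc, t0, h⟩ := (hmain i).2
  have hui : Tendsto (fun t => u t i) atTop (nhds (ulim i)) :=
    ((EuclideanSpace.proj i : EuclideanSpace ℝ (Fin d) →L[ℝ] ℝ).continuous.tendsto ulim).comp hul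
  have hvi : Tendsto (fun t => v t i) atTop (nhds (vlim i)) :=
    ((EuclideanSpace.proj i : EuclideanSpace ℝ (Fin d) →L[ℝ] ℝ).continuous.tendsto vlim).comp hvl
  have hlim : Tendsto (fun t => |u t i ^ 2 - v t i ^ 2|) atTop
      (nhds |ulim i ^ 2 - vlim i ^ 2|) := ((hui.pow 2).sub (hvi.pow 2)).abs
  exact hc.trans_le (ge_of_tendsto hlim (eventually_atTop.2 ⟨t0, h⟩))
end

section
/- Let u, v : ℝ_{≥0} → ℝ^d be continuous with θ_t = u_t ⊙ v_t. Assume that (u_t, v_t) → (u_∞, v_∞) as t → ∞, that ∇L(θ_t) ⊙ v_t → 0 and ∇L(θ_t) ⊙ u_t → 0 as t → ∞, that the interpolator set S is nonempty, and that Δ_∞ = |u_∞² − v_∞²| has strictly positive coordinates. Then ∇L(u_∞ ⊙ v_∞) = 0, L(u_∞ ⊙ v_∞) = 0, and the limit predictor θ_∞ = u_∞ ⊙ v_∞ belongs to S, i.e., it interpolates the dataset. -/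
open Real Filter

open scoped RealInnerProductSpace

/-- If `(u_t, v_t) → (u_∞, v_∞)`, `∇L(θ_t) ⊙ v_t → 0`, `∇L(θ_t) ⊙ u_t → 0`,
the interpolator set `S` is nonempty and `Δ_∞ = |u_∞² − v_∞²|` has strictly positive
coordinates, then `∇L(u_∞ ⊙ v_∞) = 0`, `L(u_∞ ⊙ v_∞) = 0`, and `θ_∞ = u_∞ ⊙ v_∞ ∈ S`. -/
theorem stmt_8 {n d : ℕ}
    (x : Fin n → EuclideanSpace ℝ (Fin d)) (y : Fin n → ℝ)
    (L : EuclideanSpace ℝ (Fin d) → ℝ)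
    (hL : L = fun θ => (1 / (2 * (n : ℝ))) * ∑ i, (y i - ⟪x i, θ⟫) ^ 2)
    (S : Set (EuclideanSpace ℝ (Fin d)))
    (hS : S = {θ | ∀ i, ⟪x i, θ⟫ = y i})
    (hSne : S.Nonempty)
    (u v : ℝ → EuclideanSpace ℝ (Fin d)) (hcu : Continuous u) (hcv : Continuous v)
    (θ : ℝ → EuclideanSpace ℝ (Fin d)) (hθ : ∀ t i, θ t i = u t i * v t i)
    (ulim vlim : EuclideanSpace ℝ (Fin d))
    (hu : Tendsto u atTop (nhds ulim)) (hv : Tendsto v atTop (nhds vlim))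
    (Gv Gu : ℝ → EuclideanSpace ℝ (Fin d))
    (hGv : ∀ t i, Gv t i = gradient L (θ t) i * v t i)
    (hGu : ∀ t i, Gu t i = gradient L (θ t) i * u t i)
    (hGv0 : Tendsto Gv atTop (nhds 0)) (hGu0 : Tendsto Gu atTop (nhds 0))
    (θlim : EuclideanSpace ℝ (Fin d)) (hθlim : ∀ i, θlim i = ulim i * vlim i)
    (hΔ : ∀ i, 0 < |ulim i ^ 2 - vlim i ^ 2|) :
    gradient L θlim = 0 ∧ L θlim = 0 ∧ θlim ∈ S := by
  have hgrad : ∀ w, HasGradientAt L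
      ((1 / (2 * (n : ℝ))) • ∑ i, (-(2 * (y i - ⟪x i, w⟫))) • x i) w := by
    intro w
    rw [hasGradientAt_iff_hasFDerivAt, hL]
    have h1 : ∀ i ∈ (Finset.univ : Finset (Fin n)),
        HasFDerivAt (fun θ : EuclideanSpace ℝ (Fin d) => (y i - ⟪x i, θ⟫) ^ 2)
          ((2 * (y i - ⟪x i, w⟫)) • (-(innerSL ℝ (x i)))) w := by
      intro i _
      have h := (((innerSL ℝ (x i)).hasFDerivAt (x := w)).const_sub (y i)).pow 2
      simpa using h
    have h2 := (HasFDerivAt.fun_sum h1).const_mul (1 / (2 * (n : ℝ)))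
    refine h2.congr_fderiv ?_
    refine ContinuousLinearMap.ext fun z => ?_
    simp [sum_inner, inner_smul_left]
  have hg : ∀ w, gradient L w =
      (1 / (2 * (n : ℝ))) • ∑ i, (-(2 * (y i - ⟪x i, w⟫))) • x i := fun w => (hgrad w).gradient
  have hcg : Continuous (gradient L) := by
    rw [funext hg]
    fun_prop
  have hco : ∀ i, Continuous (fun z : EuclideanSpace ℝ (Fin d) => z i) := fun i => by fun_prop
  have hui : ∀ i, Tendsto (fun t => u t i) atTop (nhds (ulim i)) := fun i =>
    ((hco i).tendsto ulim).comp hu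
  have hvi : ∀ i, Tendsto (fun t => v t i) atTop (nhds (vlim i)) := fun i =>
    ((hco i).tendsto vlim).comp hv
  have hθt : Tendsto θ atTop (nhds θlim) := by
    have h : Tendsto (fun t => WithLp.ofLp (θ t)) atTop (nhds (WithLp.ofLp θlim)) := by
      rw [tendsto_pi_nhds]
      intro i
      simp only [hθ, hθlim]
      exact (hui i).mul (hvi i)
    exact ((PiLp.continuous_toLp 2 (fun _ : Fin d => ℝ)).tendsto _).comp h
  have hgi : ∀ i, Tendsto (fun t => gradient L (θ t) i) atTop (nhds (gradient L θlim i)) :=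
    fun i => (((hco i).comp hcg).tendsto θlim).comp hθt
  have hg0 : gradient L θlim = 0 := by
    ext i
    have e1 : gradient L θlim i * vlim i = 0 := by
      have h := ((hco i).tendsto 0).comp hGv0
      refine tendsto_nhds_unique ((hgi i).mul (hvi i)) (h.congr ?_)
      intro t
      exact hGv t i
    have e2 : gradient L θlim i * ulim i = 0 := by
      have h := ((hco i).tendsto 0).comp hGu0
      refine tendsto_nhds_unique ((hgi i).mul (hui i)) (h.congr ?_)
      intro t
      exact hGu t i
    by_contra hne
    have hne' : gradient L θlim i ≠ 0 := hne
    have a1 := (mul_eq_zero.mp e1).resolve_left hne'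
    have a2 := (mul_eq_zero.mp e2).resolve_left hne'
    have := hΔ i
    simp [a1, a2] at this
  have hmem : ∀ i, ⟪x i, θlim⟫ = y i := by
    obtain ⟨s, hs⟩ := hSne
    rw [hS] at hs
    intro i
    have hn : (n : ℝ) ≠ 0 := by
      have := i.pos
      positivity
    have h0 := hg0
    rw [hg, smul_eq_zero] at h0
    have h3 := h0.resolve_left (by positivity)
    have h4 : ∑ j, 2 * (y j - ⟪x j, θlim⟫) ^ 2 = 0 := by
      have h5 : ⟪∑ j, (-(2 * (y j - ⟪x j, θlim⟫))) • x j, θlim - s⟫ = 0 := by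
        rw [h3, inner_zero_left]
      rw [sum_inner] at h5
      rw [← h5]
      refine Finset.sum_congr rfl fun j _ => ?_
      rw [real_inner_smul_left, inner_sub_right, hs j]
      ring
    rw [Finset.sum_eq_zero_iff_of_nonneg (fun j _ => by positivity)] at h4
    have h6 := h4 i (Finset.mem_univ i)
    have h7 : y i - ⟪x i, θlim⟫ = 0 := by
      simpa using h6
    linarith
  refine ⟨hg0, ?_, ?_⟩
  · rw [hL]
    simp [hmem]
  · rw [hS]
    exact hmem
end

section
/- Consider momentum gradient flow on the 2-layer diagonal linear network with parameter λ > 0. Assume the trajectory (u_t, v_t) is bounded and converges to (u_∞, v_∞), that ẇ_{±,t} → 0 as t → ∞, that each coordinate of t ↦ ẇ_{±,t} is square-integrable on (0, ∞), and that Δ_∞ = |u_∞² − v_∞²| has strictly positive coordinates. Then the improper integral ∫₀^∞ ∇L(θ_t) dt := lim_{t→∞} ∫₀^t ∇L(θ_s) ds exists in ℝ^d, and consequently lim_{t→∞} ∫₀^t ∇L(θ_s) e^{−(t−s)/λ} ds = 0. -/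
open Real Filter MeasureTheory intervalIntegral

open scoped RealInnerProductSpace

/-- Scalar core: existence of the improper integral. -/
lemma aux_scalar (lam : ℝ) (g w w' w'' : ℝ → ℝ) (hg : Continuous g)
    (hw : ∀ t, HasDerivAt w (w' t) t) (hw' : ∀ t, HasDerivAt w' (w'' t) t)
    (hode : ∀ t, 0 ≤ t → lam * w'' t + w' t + g t * w t = 0)
    (wl : ℝ) (hwl : wl ≠ 0) (hlim : Tendsto w atTop (nhds wl))
    (h0 : Tendsto w' atTop (nhds 0))
    (hsq : IntegrableOn (fun t => (w' t) ^ 2) (Set.Ioi (0 : ℝ))) :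
    ∃ I : ℝ, Tendsto (fun t => ∫ s in (0 : ℝ)..t, g s) atTop (nhds I) := by
  have hcw : Continuous w := continuous_iff_continuousAt.2 fun t => (hw t).continuousAt
  have hcw' : Continuous w' := continuous_iff_continuousAt.2 fun t => (hw' t).continuousAt
  have hpos : 0 < |wl| / 2 := by positivity
  have hev : ∀ᶠ t in atTop, |wl| / 2 < |w t| :=
    hlim.abs.eventually (lt_mem_nhds (by linarith [hpos]))
  obtain ⟨T0, hT0⟩ := eventually_atTop.1 hev
  set T := max T0 0 with hT
  have hTl : ∀ t, T ≤ t → |wl| / 2 < |w t| := fun t ht => hT0 t (le_trans (le_max_left _ _) ht)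
  have hT00 : 0 ≤ T := le_max_right _ _
  have hne : ∀ t, T ≤ t → w t ≠ 0 := fun t ht h => by
    have := hTl t ht
    rw [h, abs_zero] at this
    linarith
  -- a globally continuous denominator
  set m : ℝ → ℝ := fun t => max (w t ^ 2) ((|wl| / 2) ^ 2) with hm
  have hmpos : ∀ t, 0 < m t := fun t => lt_of_lt_of_le (pow_pos hpos 2) (le_max_right _ _)
  have hmc : Continuous m := by fun_prop
  have hmeq : ∀ t, T ≤ t → m t = w t ^ 2 := fun t ht => by
    apply max_eq_left
    rw [← sq_abs (w t)]
    exact pow_le_pow_left₀ hpos.le (hTl t ht).le 2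
  set q : ℝ → ℝ := fun t => w' t ^ 2 / m t with hq
  have hqc : Continuous q := by
    apply Continuous.div (by fun_prop) hmc
    exact fun t => (hmpos t).ne'
  have hqi : IntegrableOn q (Set.Ioi 0) := by
    refine Integrable.mono' (hsq.const_mul (((|wl| / 2) ^ 2)⁻¹)) hqc.aestronglyMeasurable ?_
    refine Eventually.of_forall fun t => ?_
    rw [Real.norm_of_nonneg (div_nonneg (sq_nonneg _) (hmpos t).le)]
    rw [div_eq_inv_mul]
    apply mul_le_mul_of_nonneg_right _ (sq_nonneg _)
    exact inv_anti₀ (pow_pos hpos 2) (le_max_right _ _)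
  have hqlim := intervalIntegral_tendsto_integral_Ioi 0 hqi tendsto_id
  -- conserved quantity
  set H : ℝ → ℝ := fun t => (∫ s in (0 : ℝ)..t, g s) + lam * (w' t / w t) + Real.log (w t)
    + lam * ∫ s in (0 : ℝ)..t, q s with hH
  have hder : ∀ t, T ≤ t → HasDerivAt H 0 t := by
    intro t ht
    have h1 := intervalIntegral.integral_hasDerivAt_right (hg.intervalIntegrable 0 t)
      (hg.stronglyMeasurableAtFilter _ _) hg.continuousAt
    have h2 := intervalIntegral.integral_hasDerivAt_right (hqc.intervalIntegrable 0 t)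
      (hqc.stronglyMeasurableAtFilter _ _) hqc.continuousAt
    have h3 := ((hw' t).div (hw t) (hne t ht)).const_mul lam
    have h4 := (hw t).log (hne t ht)
    have h5 := ((h1.add h3).add h4).add (h2.const_mul lam)
    refine h5.congr_deriv ?_
    have hqt : q t = w' t ^ 2 / w t ^ 2 := by rw [← hmeq t ht]
    rw [hqt]
    have := hode t (hT00.trans ht)
    have hn := hne t ht
    field_simp
    linear_combination (w t) * this
  have hconst : ∀ t, T ≤ t → H t = H T := by
    intro t ht
    refine constant_of_has_deriv_right_zero (a := T) (b := t) ?_ ?_ t ⟨ht, le_rfl⟩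
    · exact fun s hs => (hder s hs.1).continuousAt.continuousWithinAt
    · exact fun s hs => (hder s hs.1).hasDerivWithinAt
  have hl : Tendsto (fun t => H T - lam * (w' t / w t) - Real.log (w t)
    - lam * ∫ s in (0 : ℝ)..t, q s) atTop (nhds (H T - lam * (0 / wl) - Real.log wl
    - lam * ∫ s in Set.Ioi (0 : ℝ), q s)) :=
    (((tendsto_const_nhds.sub ((h0.div hlim hwl).const_mul lam)).sub (hlim.log hwl)).sub
      (hqlim.const_mul lam))
  refine ⟨_, hl.congr' ?_⟩
  filter_upwards [eventually_ge_atTop T] with t ht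
  rw [← hconst t ht]
  simp only [hH]
  ring

/-- A convergent function whose primitive converges has limit zero. -/
lemma aux_zero (g : ℝ → ℝ) (hg : Continuous g) (c I : ℝ) (hc : Tendsto g atTop (nhds c))
    (hI : Tendsto (fun t => ∫ s in (0 : ℝ)..t, g s) atTop (nhds I)) : c = 0 := by
  set F : ℝ → ℝ := fun t => ∫ s in (0 : ℝ)..t, g s with hF
  have hder : ∀ t, HasDerivAt F (g t) t := fun t =>
    intervalIntegral.integral_hasDerivAt_right (hg.intervalIntegrable 0 t)
      (hg.stronglyMeasurableAtFilter _ _) hg.continuousAt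
  have hx : ∀ t : ℝ, ∃ ξ ∈ Set.Ioo t (t + 1), g ξ = F (t + 1) - F t := by
    intro t
    obtain ⟨ξ, h1, h2⟩ := exists_hasDerivAt_eq_slope F g (by linarith : t < t + 1)
      (fun s _ => (hder s).continuousAt.continuousWithinAt) (fun s _ => hder s)
    exact ⟨ξ, h1, by rw [h2]; simp⟩
  choose ξ h1 h2 using hx
  have hξ : Tendsto ξ atTop atTop := tendsto_atTop_mono (fun t => (h1 t).1.le) tendsto_id
  have ha := hc.comp hξ
  have hb : Tendsto (fun t => F (t + 1) - F t) atTop (nhds (I - I)) :=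
    (hI.comp (tendsto_atTop_add_const_right _ 1 tendsto_id)).sub hI
  rw [sub_self] at hb
  exact tendsto_nhds_unique ha (hb.congr fun t => (h2 t).symm)

/-- Exponential averages of a function tending to zero tend to zero. -/
lemma aux_exp {E : Type*} [NormedAddCommGroup E] [NormedSpace ℝ E] [CompleteSpace E]
    (lam : ℝ) (hlam : 0 < lam) (g : ℝ → E) (hg : Continuous g)
    (h0 : Tendsto g atTop (nhds 0)) :
    Tendsto (fun t => ∫ s in (0 : ℝ)..t, Real.exp (-(t - s) / lam) • g s) atTop (nhds 0) := by
  obtain ⟨C, hC0, hC⟩ : ∃ C : ℝ, 0 ≤ C ∧ ∀ t, 0 ≤ t → ‖g t‖ ≤ C := by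
    have hev : ∀ᶠ t in atTop, ‖g t‖ < 1 := by
      have := h0.norm
      rw [norm_zero] at this
      exact this.eventually (gt_mem_nhds one_pos)
    obtain ⟨T, hT⟩ := eventually_atTop.1 hev
    obtain ⟨C, hC⟩ := (isCompact_Icc (a := (0 : ℝ)) (b := T)).exists_bound_of_continuousOn
      hg.continuousOn
    refine ⟨max C 1, by positivity, fun t ht => ?_⟩
    rcases le_total t T with h | h
    · exact (hC t ⟨ht, h⟩).trans (le_max_left _ _)
    · exact (hT t h).le.trans (le_max_right _ _)
  have hint : IntegrableOn (fun r : ℝ => C * Real.exp (-(1 / lam) * r)) (Set.Ioi 0) :=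
    (exp_neg_integrableOn_Ioi 0 (by positivity)).const_mul C
  have key : Tendsto (fun t => ∫ r in Set.Ioi (0 : ℝ),
      (Set.Iic t).indicator (fun r => Real.exp (-(1 / lam) * r) • g (t - r)) r) atTop
      (nhds (∫ r in Set.Ioi (0 : ℝ), (0 : E))) := by
    refine tendsto_integral_filter_of_dominated_convergence
      (fun r : ℝ => C * Real.exp (-(1 / lam) * r)) ?_ ?_ hint ?_
    · refine Eventually.of_forall fun t => ?_
      apply AEStronglyMeasurable.indicator _ measurableSet_Iic
      exact Continuous.aestronglyMeasurable (by fun_prop)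
    · refine Eventually.of_forall fun t => Eventually.of_forall fun r => ?_
      by_cases hr : r ∈ Set.Iic t
      · rw [Set.indicator_of_mem hr, norm_smul, Real.norm_of_nonneg (Real.exp_pos _).le, mul_comm]
        exact mul_le_mul_of_nonneg_right (hC _ (sub_nonneg.2 hr)) (Real.exp_pos _).le
      · rw [Set.indicator_of_notMem hr, norm_zero]
        positivity
    · refine Eventually.of_forall fun r => ?_
      have h1 : Tendsto (fun t : ℝ => Real.exp (-(1 / lam) * r) • g (t - r)) atTop (nhds 0) := by
        have := (h0.comp (tendsto_atTop_add_const_right _ (-r) tendsto_id)).const_smul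
          (Real.exp (-(1 / lam) * r))
        rw [smul_zero] at this
        exact this
      refine h1.congr' ?_
      filter_upwards [eventually_ge_atTop r] with t ht
      rw [Set.indicator_of_mem (show r ∈ Set.Iic t from ht)]
  rw [integral_zero] at key
  refine key.congr' ?_
  filter_upwards [eventually_ge_atTop 0] with t ht
  rw [setIntegral_indicator measurableSet_Iic, Set.Ioi_inter_Iic,
    ← intervalIntegral.integral_of_le ht]
  have := intervalIntegral.integral_comp_sub_left (a := 0) (b := t)
    (fun s => Real.exp (-(t - s) / lam) • g s) t
  rw [sub_self, sub_zero] at this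
  rw [← this]
  congr 1
  ext r
  congr 2
  ring

/-- For MGF on the 2-layer diagonal linear network with `λ > 0`, if the
trajectory is bounded and converges, `ẇ_{±,t} → 0`, each coordinate of `ẇ_{±,t}` is
square-integrable on `(0,∞)`, and `Δ_∞` has strictly positive coordinates, then the improper
integral `∫₀^∞ ∇L(θ_t) dt = lim_{t→∞} ∫₀^t ∇L(θ_s) ds` exists, and consequently
`∫₀^t ∇L(θ_s) e^{−(t−s)/λ} ds → 0` as `t → ∞`. -/
theorem stmt_9 {n d : ℕ}
    (x : Fin n → EuclideanSpace ℝ (Fin d)) (y : Fin n → ℝ)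
    (L : EuclideanSpace ℝ (Fin d) → ℝ)
    (hL : L = fun θ => (1 / (2 * (n : ℝ))) * ∑ i, (y i - ⟪x i, θ⟫) ^ 2)
    (lam : ℝ) (hlam : 0 < lam)
    (u v u' v' u'' v'' : ℝ → EuclideanSpace ℝ (Fin d))
    (hu' : ∀ t, HasDerivAt u (u' t) t) (hv' : ∀ t, HasDerivAt v (v' t) t)
    (hu'' : ∀ t, HasDerivAt u' (u'' t) t) (hv'' : ∀ t, HasDerivAt v' (v'' t) t)
    (hcu : Continuous u'') (hcv : Continuous v'')
    (θ : ℝ → EuclideanSpace ℝ (Fin d)) (hθ : ∀ t i, θ t i = u t i * v t i)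
    (hodeu : ∀ t, 0 ≤ t → ∀ i, lam * u'' t i + u' t i + gradient L (θ t) i * v t i = 0)
    (hodev : ∀ t, 0 ≤ t → ∀ i, lam * v'' t i + v' t i + gradient L (θ t) i * u t i = 0)
    (hbdd : ∃ C : ℝ, ∀ t, 0 ≤ t → ‖u t‖ ≤ C ∧ ‖v t‖ ≤ C)
    (ulim vlim : EuclideanSpace ℝ (Fin d))
    (hu : Tendsto u atTop (nhds ulim)) (hv : Tendsto v atTop (nhds vlim))
    (hwp0 : Tendsto (fun t => u' t + v' t) atTop (nhds 0))
    (hwm0 : Tendsto (fun t => u' t - v' t) atTop (nhds 0))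
    (hsqp : ∀ i, IntegrableOn (fun t => (u' t i + v' t i) ^ 2) (Set.Ioi (0 : ℝ)))
    (hsqm : ∀ i, IntegrableOn (fun t => (u' t i - v' t i) ^ 2) (Set.Ioi (0 : ℝ)))
    (hΔ : ∀ i, 0 < |ulim i ^ 2 - vlim i ^ 2|) :
    ∃ I : EuclideanSpace ℝ (Fin d),
      Tendsto (fun t => ∫ s in (0 : ℝ)..t, gradient L (θ s)) atTop (nhds I) ∧
        Tendsto (fun t => ∫ s in (0 : ℝ)..t, Real.exp (-(t - s) / lam) • gradient L (θ s))
          atTop (nhds (0 : EuclideanSpace ℝ (Fin d))) := by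
  have hLs : ContDiff ℝ 1 L := by
    rw [hL]
    refine contDiff_const.mul (ContDiff.sum fun i _ => ?_)
    exact (contDiff_const.sub (contDiff_const.inner ℝ contDiff_id)).pow 2
  have hgc : Continuous (gradient L) := by
    unfold gradient
    exact (InnerProductSpace.toDual ℝ _).symm.continuous.comp (hLs.continuous_fderiv one_ne_zero)
  have huc : Continuous u := continuous_iff_continuousAt.2 fun t => (hu' t).continuousAt
  have hvc : Continuous v := continuous_iff_continuousAt.2 fun t => (hv' t).continuousAt
  have hθe : θ = fun t => WithLp.toLp 2 (fun i => u t i * v t i) := by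
    ext t i
    exact hθ t i
  have hθc : Continuous θ := by
    rw [hθe]
    fun_prop
  have hco : ∀ i : Fin d, Continuous fun z : EuclideanSpace ℝ (Fin d) => z i := fun i => by fun_prop
  have cl : ∀ {f : ℝ → EuclideanSpace ℝ (Fin d)} {a}, Tendsto f atTop (nhds a) →
      ∀ i, Tendsto (fun t => f t i) atTop (nhds (a i)) :=
    fun {f a} h i => ((hco i).tendsto a).comp h
  have lc : ∀ {f : ℝ → EuclideanSpace ℝ (Fin d)} {a : EuclideanSpace ℝ (Fin d)},
      (∀ i, Tendsto (fun t => f t i) atTop (nhds (a i))) → Tendsto f atTop (nhds a) := by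
    intro f a h
    have h1 : Tendsto (fun t => WithLp.ofLp (f t)) atTop (nhds (WithLp.ofLp a)) :=
      tendsto_pi_nhds.2 h
    exact ((PiLp.continuous_toLp 2 (fun _ : Fin d => ℝ)).tendsto _).comp h1
  have hθl : Tendsto θ atTop (nhds (WithLp.toLp 2 (fun i => ulim i * vlim i))) := by
    apply lc
    intro i
    simp only [hθ]
    exact (cl hu i).mul (cl hv i)
  set g : ℝ → EuclideanSpace ℝ (Fin d) := fun t => gradient L (θ t) with hg
  have hgcont : Continuous g := hgc.comp hθc
  have hgl := (hgc.tendsto _).comp hθl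
  change Tendsto g atTop _ at hgl
  have dc : ∀ {f : ℝ → EuclideanSpace ℝ (Fin d)} {f' t}, HasDerivAt f f' t →
      ∀ i, HasDerivAt (fun t => f t i) (f' i) t := fun {f f' t} h i =>
    ((EuclideanSpace.proj (𝕜 := ℝ) i).hasFDerivAt.comp_hasDerivAt t h)
  have hex : ∀ i, ∃ I : ℝ, Tendsto (fun t => ∫ s in (0 : ℝ)..t, g s i) atTop (nhds I) := by
    intro i
    refine aux_scalar lam (fun t => g t i) (fun t => u t i + v t i) (fun t => u' t i + v' t i)
      (fun t => u'' t i + v'' t i) ((hco i).comp hgcont) (fun t => (dc (hu' t) i).add (dc (hv' t) i))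
      (fun t => (dc (hu'' t) i).add (dc (hv'' t) i)) ?_ (ulim i + vlim i) ?_
      ((cl hu i).add (cl hv i)) ?_ (hsqp i)
    · intro t ht
      have h1 := hodeu t ht i
      have h2 := hodev t ht i
      simp only [hg]
      linear_combination h1 + h2
    · intro h
      have := hΔ i
      rw [show ulim i ^ 2 - vlim i ^ 2 = (ulim i + vlim i) * (ulim i - vlim i) by ring, h,
        zero_mul, abs_zero] at this
      exact lt_irrefl _ this
    · exact cl hwp0 i
  choose I hI using hex
  have hz : gradient L (WithLp.toLp 2 (fun i => ulim i * vlim i)) = 0 := by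
    ext i
    exact aux_zero (fun t => g t i) ((hco i).comp hgcont) _ _ (cl hgl i) (hI i)
  rw [hz] at hgl
  refine ⟨WithLp.toLp 2 I, lc fun i => ?_, aux_exp lam hlam g hgcont hgl⟩
  refine (hI i).congr fun t => ?_
  exact (EuclideanSpace.proj (𝕜 := ℝ) i).intervalIntegral_comp_comm
    (hgcont.intervalIntegrable (μ := volume) 0 t)
end

section
/- Consider momentum gradient flow on the 2-layer diagonal linear network with parameter λ > 0 and zero initial velocities, where the trajectory (u_t, v_t) is bounded and converges to (u_∞, v_∞), ẇ_{±,t} → 0 as t → ∞, each coordinate of t ↦ ẇ_{±,t} is square-integrable on (0, ∞), and the balancedness Δ_t has strictly positive coordinates for every t ∈ [0, ∞) and in the limit. Assume additionally that for every coordinate i, neither t ↦ ẇ_{+,t,i} nor t ↦ ẇ_{−,t,i} is identically zero. Then, with α = max(‖u₀‖_∞, ‖v₀‖_∞): (i) the perturbed initialisation θ̃₀ = (1/4)(w_{+,0}² ⊙ exp(−2λ∫₀^∞(ẇ_{+,t}/w_{+,t})² dt) − w_{−,0}² ⊙ exp(−2λ∫₀^∞(ẇ_{−,t}/w_{−,t})²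 dt)) satisfies |θ̃₀,i| < α² for every coordinate i; and (ii) Δ_∞ = Δ₀ ⊙ exp(−λ∫₀^∞ [(ẇ_{+,t}/w_{+,t})² + (ẇ_{−,t}/w_{−,t})²] dt), so that in particular Δ_{∞,i} < Δ_{0,i} for every coordinate i. -/
open Real Filter MeasureTheory

open scoped RealInnerProductSpace

lemma mgf_scalar (lam : ℝ) (hlam : 0 < lam) (a b a' b' a'' b'' g : ℝ → ℝ)
    (ha' : ∀ t, HasDerivAt a (a' t) t) (hb' : ∀ t, HasDerivAt b (b' t) t)
    (ha'' : ∀ t, HasDerivAt a' (a'' t) t) (hb'' : ∀ t, HasDerivAt b' (b'' t) t)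
    (hodea : ∀ t, 0 ≤ t → lam * a'' t + a' t + g t * a t = 0)
    (hodeb : ∀ t, 0 ≤ t → lam * b'' t + b' t - g t * b t = 0)
    (ha0 : a' 0 = 0) (hb0 : b' 0 = 0) (A B : ℝ)
    (hA : Tendsto a atTop (nhds A)) (hB : Tendsto b atTop (nhds B))
    (hA' : Tendsto a' atTop (nhds 0)) (hB' : Tendsto b' atTop (nhds 0))
    (hane : ∀ t, 0 ≤ t → a t ≠ 0) (hbne : ∀ t, 0 ≤ t → b t ≠ 0)
    (hAne : A ≠ 0) (hBne : B ≠ 0)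
    (hnz : ∃ t, 0 ≤ t ∧ a' t ≠ 0) :
    |A * B| = |a 0 * b 0| * Real.exp (-(lam *
      ∫ t in Set.Ioi (0 : ℝ), ((a' t / a t) ^ 2 + (b' t / b t) ^ 2))) ∧
    |A * B| < |a 0 * b 0| := by
  set F : ℝ → ℝ := fun t => (Real.log (a t) + Real.log (b t)) + lam * (a' t / a t + b' t / b t)
    with hF
  have hder : ∀ t ∈ Set.Ici (0 : ℝ),
      HasDerivAt F (-lam * ((a' t / a t) ^ 2 + (b' t / b t) ^ 2)) t := by
    intro t ht
    have hta := hane t ht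
    have htb := hbne t ht
    have h := (((ha' t).log hta).add ((hb' t).log htb)).add
      ((((ha'' t).div (ha' t) hta).add ((hb'' t).div (hb' t) htb)).const_mul lam)
    refine h.congr_deriv ?_
    have e1 : g t = -(lam * a'' t + a' t) / a t := by
      rw [eq_div_iff hta]; linarith [hodea t ht]
    have e2 : g t = (lam * b'' t + b' t) / b t := by
      rw [eq_div_iff htb]; linarith [hodeb t ht]
    have e3 : (lam * b'' t + b' t) / b t + (lam * a'' t + a' t) / a t = 0 := by
      rw [← e2]
      have : (lam * a'' t + a' t) / a t = - g t := by rw [e1]; ring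
      rw [this]; ring
    have e4 : a' t / a t + b' t / b t +
        lam * ((a'' t * a t - a' t * a' t) / a t ^ 2 + (b'' t * b t - b' t * b' t) / b t ^ 2)
        = ((lam * b'' t + b' t) / b t + (lam * a'' t + a' t) / a t)
          + -lam * ((a' t / a t) ^ 2 + (b' t / b t) ^ 2) := by
      field_simp
      ring
    rw [e4, e3, zero_add]
  have hnonpos : ∀ t ∈ Set.Ioi (0 : ℝ), -lam * ((a' t / a t) ^ 2 + (b' t / b t) ^ 2) ≤ 0 := by
    intro t _
    have : 0 ≤ lam * ((a' t / a t) ^ 2 + (b' t / b t) ^ 2) := by positivity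
    linarith
  have hlim : Tendsto F atTop (nhds (Real.log A + Real.log B)) := by
    have h := ((hA.log hAne).add (hB.log hBne)).add
      (((hA'.div hA hAne).add (hB'.div hB hBne)).const_mul lam)
    simpa using h
  have hint := integral_Ioi_of_hasDerivAt_of_nonpos' hder hnonpos hlim
  have hintg := integrableOn_Ioi_deriv_of_nonpos' hder hnonpos hlim
  have hintg' : IntegrableOn (fun t => (a' t / a t) ^ 2 + (b' t / b t) ^ 2)
      (Set.Ioi (0 : ℝ)) := by
    have := hintg.const_mul (-lam)⁻¹
    refine this.congr (Eventually.of_forall fun t => ?_)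
    have : lam ≠ 0 := hlam.ne'
    dsimp only
    field_simp
  rw [integral_const_mul] at hint
  have hF0 : F 0 = Real.log (a 0) + Real.log (b 0) := by simp [hF, ha0, hb0]
  rw [hF0] at hint
  set I := ∫ t in Set.Ioi (0 : ℝ), ((a' t / a t) ^ 2 + (b' t / b t) ^ 2) with hI
  have ha00 := hane 0 le_rfl
  have hb00 := hbne 0 le_rfl
  have hpos0 : 0 < |a 0 * b 0| := abs_pos.mpr (mul_ne_zero ha00 hb00)
  have heq : |A * B| = |a 0 * b 0| * Real.exp (-(lam * I)) := by
    rw [← Real.exp_log (abs_pos.mpr (mul_ne_zero hAne hBne)), ← Real.exp_log hpos0,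
      ← Real.exp_add, Real.log_abs, Real.log_abs, Real.log_mul hAne hBne, Real.log_mul ha00 hb00]
    congr 1
    linarith
  refine ⟨heq, ?_⟩
  have hIpos : 0 < I := by
    obtain ⟨t, ht0, htne⟩ := hnz
    have ht : 0 < t := by
      rcases ht0.eq_or_lt with h | h
      · subst h; exact absurd ha0 htne
      · exact h
    rw [hI, setIntegral_pos_iff_support_of_nonneg_ae
      (Eventually.of_forall fun s => by positivity) hintg']
    refine Measure.measure_pos_of_mem_nhds (x := t) volume ?_
    refine inter_mem ?_ (Ioi_mem_nhds ht)
    have h1 : ∀ᶠ s in nhds t, a' s ≠ 0 := (ha'' t).continuousAt.eventually_ne htne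
    filter_upwards [h1, Ioi_mem_nhds ht] with s hs1 hs2
    have h2 := hane s (le_of_lt hs2)
    have h3 : a' s / a s ≠ 0 := div_ne_zero hs1 h2
    have : 0 < (a' s / a s) ^ 2 + (b' s / b s) ^ 2 := by positivity
    exact this.ne'
  rw [heq]
  have : Real.exp (-(lam * I)) < 1 := by
    rw [Real.exp_lt_one_iff]
    have := mul_pos hlam hIpos
    linarith
  nlinarith

lemma theta_bound (p q α I J lam : ℝ) (hlam : 0 < lam) (hI : 0 ≤ I) (hJ : 0 ≤ J)
    (hp : |p| ≤ α) (hq : |q| ≤ α) (hne : p ^ 2 - q ^ 2 ≠ 0) :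
    |(1 / 4) * ((p + q) ^ 2 * Real.exp (-(2 * lam * I))
      - (p - q) ^ 2 * Real.exp (-(2 * lam * J)))| < α ^ 2 := by
  have e1 : Real.exp (-(2 * lam * I)) ≤ 1 := by
    rw [Real.exp_le_one_iff]
    have : 0 ≤ 2 * lam * I := by positivity
    linarith
  have e2 : Real.exp (-(2 * lam * J)) ≤ 1 := by
    rw [Real.exp_le_one_iff]
    have : 0 ≤ 2 * lam * J := by positivity
    linarith
  have p1 := Real.exp_pos (-(2 * lam * I))
  have p2 := Real.exp_pos (-(2 * lam * J))
  have hp2 : p ^ 2 ≤ α ^ 2 := sq_le_sq' (by linarith [neg_abs_le p]) (by linarith [le_abs_self p])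
  have hq2 : q ^ 2 ≤ α ^ 2 := sq_le_sq' (by linarith [neg_abs_le q]) (by linarith [le_abs_self q])
  have hsum : p ^ 2 + q ^ 2 < 2 * α ^ 2 := by
    rcases lt_or_gt_of_ne hne with h | h <;> linarith
  have k1 : (p + q) ^ 2 < 4 * α ^ 2 := by nlinarith [sq_nonneg (p - q)]
  have k2 : (p - q) ^ 2 < 4 * α ^ 2 := by nlinarith [sq_nonneg (p + q)]
  have m1 : (p + q) ^ 2 * Real.exp (-(2 * lam * I)) ≤ (p + q) ^ 2 :=
    mul_le_of_le_one_right (sq_nonneg _) e1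
  have m2 : (p - q) ^ 2 * Real.exp (-(2 * lam * J)) ≤ (p - q) ^ 2 :=
    mul_le_of_le_one_right (sq_nonneg _) e2
  have n1 : 0 ≤ (p + q) ^ 2 * Real.exp (-(2 * lam * I)) := by positivity
  have n2 : 0 ≤ (p - q) ^ 2 * Real.exp (-(2 * lam * J)) := by positivity
  rw [abs_lt]
  constructor <;> linarith

lemma coord_deriv {d : ℕ} {f : ℝ → EuclideanSpace ℝ (Fin d)} {f' : EuclideanSpace ℝ (Fin d)}
    {t : ℝ} (h : HasDerivAt f f' t) (i : Fin d) : HasDerivAt (fun s => f s i) (f' i) t :=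
  (EuclideanSpace.proj i : EuclideanSpace ℝ (Fin d) →L[ℝ] ℝ).hasFDerivAt.comp_hasDerivAt t h

lemma coord_tendsto {d : ℕ} {f : ℝ → EuclideanSpace ℝ (Fin d)} {l : EuclideanSpace ℝ (Fin d)}
    (h : Tendsto f atTop (nhds l)) (i : Fin d) :
    Tendsto (fun s => f s i) atTop (nhds (l i)) :=
  ((EuclideanSpace.proj i : EuclideanSpace ℝ (Fin d) →L[ℝ] ℝ).continuous.tendsto l).comp h

/-- For MGF on the 2-layer diagonal linear network with `λ > 0`, zero initial
velocities, bounded converging trajectory, `ẇ_± → 0`, square-integrable coordinates of `ẇ_±`,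
balancedness strictly positive for all times and in the limit, and `ẇ_{±,·,i}` not identically
zero for any coordinate `i`: with `α = max(‖u₀‖_∞, ‖v₀‖_∞)`,
(i) the perturbed initialisation satisfies `|θ̃₀,i| < α²` for every `i`, and
(ii) `Δ_∞ = Δ₀ ⊙ exp(−λ∫₀^∞[(ẇ₊/w₊)² + (ẇ₋/w₋)²]dt)`, so `Δ_{∞,i} < Δ_{0,i}` for every `i`. -/
theorem stmt_12 {n d : ℕ}
    (x : Fin n → EuclideanSpace ℝ (Fin d)) (y : Fin n → ℝ)
    (L : EuclideanSpace ℝ (Fin d) → ℝ)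
    (hL : L = fun θ => (1 / (2 * (n : ℝ))) * ∑ i, (y i - ⟪x i, θ⟫) ^ 2)
    (lam : ℝ) (hlam : 0 < lam)
    (u v u' v' u'' v'' : ℝ → EuclideanSpace ℝ (Fin d))
    (hu' : ∀ t, HasDerivAt u (u' t) t) (hv' : ∀ t, HasDerivAt v (v' t) t)
    (hu'' : ∀ t, HasDerivAt u' (u'' t) t) (hv'' : ∀ t, HasDerivAt v' (v'' t) t)
    (hcu : Continuous u'') (hcv : Continuous v'')
    (θ : ℝ → EuclideanSpace ℝ (Fin d)) (hθ : ∀ t i, θ t i = u t i * v t i)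
    (hodeu : ∀ t, 0 ≤ t → ∀ i, lam * u'' t i + u' t i + gradient L (θ t) i * v t i = 0)
    (hodev : ∀ t, 0 ≤ t → ∀ i, lam * v'' t i + v' t i + gradient L (θ t) i * u t i = 0)
    (hu0 : u' 0 = 0) (hv0 : v' 0 = 0)
    (hbdd : ∃ C : ℝ, ∀ t, 0 ≤ t → ‖u t‖ ≤ C ∧ ‖v t‖ ≤ C)
    (ulim vlim : EuclideanSpace ℝ (Fin d))
    (hu : Tendsto u atTop (nhds ulim)) (hv : Tendsto v atTop (nhds vlim))
    (hwp0 : Tendsto (fun t => u' t + v' t) atTop (nhds 0))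
    (hwm0 : Tendsto (fun t => u' t - v' t) atTop (nhds 0))
    (hsqp : ∀ i, IntegrableOn (fun t => (u' t i + v' t i) ^ 2) (Set.Ioi (0 : ℝ)))
    (hsqm : ∀ i, IntegrableOn (fun t => (u' t i - v' t i) ^ 2) (Set.Ioi (0 : ℝ)))
    (hΔt : ∀ t, 0 ≤ t → ∀ i, 0 < |u t i ^ 2 - v t i ^ 2|)
    (hDinf : ∀ i, 0 < |ulim i ^ 2 - vlim i ^ 2|)
    -- for every coordinate, neither ẇ₊ nor ẇ₋ is identically zero on [0, ∞)
    (hnz : ∀ i, (∃ t, 0 ≤ t ∧ u' t i + v' t i ≠ 0) ∧ (∃ t, 0 ≤ t ∧ u' t i - v' t i ≠ 0))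
    -- the initialisation scale
    (α : ℝ) (hα : α = max (⨆ i, |u 0 i|) (⨆ i, |v 0 i|))
    -- the perturbed initialisation
    (θtilde : EuclideanSpace ℝ (Fin d))
    (hθtilde : ∀ i, θtilde i = (1 / 4) *
      ((u 0 i + v 0 i) ^ 2 *
          Real.exp (-(2 * lam *
            ∫ t in Set.Ioi (0 : ℝ), ((u' t i + v' t i) / (u t i + v t i)) ^ 2)) -
        (u 0 i - v 0 i) ^ 2 *
          Real.exp (-(2 * lam *
            ∫ t in Set.Ioi (0 : ℝ), ((u' t i - v' t i) / (u t i - v t i)) ^ 2)))) :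
    -- (i) the perturbed initialisation is smaller than α²
    (∀ i, |θtilde i| < α ^ 2) ∧
      -- (ii) formula for the asymptotic balancedness, and Δ_∞ < Δ₀
      (∀ i, |ulim i ^ 2 - vlim i ^ 2| =
          |u 0 i ^ 2 - v 0 i ^ 2| *
            Real.exp (-(lam *
              ∫ t in Set.Ioi (0 : ℝ),
                (((u' t i + v' t i) / (u t i + v t i)) ^ 2 +
                  ((u' t i - v' t i) / (u t i - v t i)) ^ 2)))) ∧
      (∀ i, |ulim i ^ 2 - vlim i ^ 2| < |u 0 i ^ 2 - v 0 i ^ 2|) := by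
  have hfac : ∀ p q : ℝ, 0 < |p ^ 2 - q ^ 2| → p + q ≠ 0 ∧ p - q ≠ 0 := by
    intro p q h
    have h1 : (p + q) * (p - q) ≠ 0 := by
      have := abs_pos.mp h
      rwa [show (p + q) * (p - q) = p ^ 2 - q ^ 2 by ring]
    exact ⟨left_ne_zero_of_mul h1, right_ne_zero_of_mul h1⟩
  have key := fun i : Fin d => mgf_scalar lam hlam
    (fun t => u t i + v t i) (fun t => u t i - v t i)
    (fun t => u' t i + v' t i) (fun t => u' t i - v' t i)
    (fun t => u'' t i + v'' t i) (fun t => u'' t i - v'' t i)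
    (fun t => gradient L (θ t) i)
    (fun t => (coord_deriv (hu' t) i).add (coord_deriv (hv' t) i))
    (fun t => (coord_deriv (hu' t) i).sub (coord_deriv (hv' t) i))
    (fun t => (coord_deriv (hu'' t) i).add (coord_deriv (hv'' t) i))
    (fun t => (coord_deriv (hu'' t) i).sub (coord_deriv (hv'' t) i))
    (fun t ht => by linear_combination hodeu t ht i + hodev t ht i)
    (fun t ht => by linear_combination hodeu t ht i - hodev t ht i)
    (by simp [hu0, hv0]) (by simp [hu0, hv0])
    (ulim i + vlim i) (ulim i - vlim i)
    ((coord_tendsto hu i).add (coord_tendsto hv i))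
    ((coord_tendsto hu i).sub (coord_tendsto hv i))
    (by simpa using coord_tendsto hwp0 i) (by simpa using coord_tendsto hwm0 i)
    (fun t ht => (hfac _ _ (hΔt t ht i)).1) (fun t ht => (hfac _ _ (hΔt t ht i)).2)
    (hfac _ _ (hDinf i)).1 (hfac _ _ (hDinf i)).2 (hnz i).1
  have hr : ∀ p q : ℝ, (p + q) * (p - q) = p ^ 2 - q ^ 2 := fun p q => by ring
  simp only [hr] at key
  refine ⟨fun i => ?_, fun i => (key i).1, fun i => (key i).2⟩
  rw [hθtilde i]
  apply theta_bound _ _ _ _ _ _ hlam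
  · exact integral_nonneg fun t => sq_nonneg _
  · exact integral_nonneg fun t => sq_nonneg _
  · rw [hα]
    exact le_max_of_le_left (le_ciSup (f := fun i => |u 0 i|) (Set.finite_range _).bddAbove i)
  · rw [hα]
    exact le_max_of_le_right (le_ciSup (f := fun i => |v 0 i|) (Set.finite_range _).bddAbove i)
  · exact abs_pos.mp (hΔt 0 le_rfl i)
end

section
/- Fix θ ∈ ℝ^d with θ ≠ 0 and δ ∈ ℝ^d with strictly positive coordinates. Then the hyperbolic entropy satisfies lim_{s→0⁺} ψ_{sδ}(θ) / ( (1/2) Σ_{i=1}^d |θ_i| · ln(1/(sδ_i)) ) = 1; that is, as the scale Δ = sδ tends to 0, ψ_Δ(θ) is asymptotically equivalent to a logarithmically weighted ℓ¹-norm of θ. -/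
open Real Filter Topology

/-- Hyperbolic entropy at scale `Δ` (with strictly positive coordinates). -/
noncomputable def hypEntropy {d : ℕ} (Δ : Fin d → ℝ) (θ : EuclideanSpace ℝ (Fin d)) : ℝ :=
  (1 / 4) * ∑ i, (2 * θ i * Real.arsinh (2 * θ i / Δ i) -
    Real.sqrt (4 * θ i ^ 2 + Δ i ^ 2) + Δ i)

theorem aux_arsinh (t D : ℝ) (hD : 0 < D) :
    t * Real.arsinh (2 * t / D) =
      |t| * (Real.log (1 / D) + Real.log (2 * |t| + Real.sqrt (4 * t ^ 2 + D ^ 2))) := by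
  have key : ∀ u : ℝ, 0 ≤ u → Real.arsinh (2 * u / D) =
      Real.log (1 / D) + Real.log (2 * u + Real.sqrt (4 * u ^ 2 + D ^ 2)) := by
    intro u hu
    have hs : 0 < Real.sqrt (4 * u ^ 2 + D ^ 2) := Real.sqrt_pos.mpr (by positivity)
    rw [← Real.log_mul (by positivity) (by positivity), Real.arsinh]
    congr 1
    have : Real.sqrt (1 + (2 * u / D) ^ 2) = Real.sqrt (4 * u ^ 2 + D ^ 2) / D := by
      rw [show 1 + (2 * u / D) ^ 2 = (4 * u ^ 2 + D ^ 2) / D ^ 2 by field_simp; ring,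
        Real.sqrt_div' _ (by positivity), Real.sqrt_sq hD.le]
    rw [this]
    field_simp
  rcases le_total 0 t with ht | ht
  · rw [abs_of_nonneg ht, key t ht]
  · have h := key (-t) (by linarith)
    rw [show 2 * -t / D = -(2 * t / D) by ring, Real.arsinh_neg, neg_sq] at h
    rw [abs_of_nonpos ht, ← h]
    ring

theorem aux_lim (t c : ℝ) :
    Tendsto (fun s : ℝ => 2 * (|t| * Real.log (2 * |t| + Real.sqrt (4 * t ^ 2 + (s * c) ^ 2)))
      - Real.sqrt (4 * t ^ 2 + (s * c) ^ 2) + s * c) (𝓝[>] (0 : ℝ))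
      (𝓝 (2 * (|t| * Real.log (2 * |t| + Real.sqrt (4 * t ^ 2 + (0 * c) ^ 2)))
      - Real.sqrt (4 * t ^ 2 + (0 * c) ^ 2) + 0 * c)) := by
  refine Tendsto.mono_left ?_ nhdsWithin_le_nhds
  rcases eq_or_ne t 0 with rfl | ht
  · simp only [abs_zero, zero_mul, mul_zero]
    exact Continuous.tendsto' (by fun_prop) _ _ (by simp)
  · have ha : 0 < |t| := abs_pos.mpr ht
    have hc : Continuous (fun s : ℝ =>
        2 * (|t| * Real.log (2 * |t| + Real.sqrt (4 * t ^ 2 + (s * c) ^ 2)))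
        - Real.sqrt (4 * t ^ 2 + (s * c) ^ 2) + s * c) := by
      have hl : Continuous (fun s : ℝ =>
          Real.log (2 * |t| + Real.sqrt (4 * t ^ 2 + (s * c) ^ 2))) :=
        Continuous.log (by fun_prop) (fun s => by positivity)
      fun_prop
    exact hc.tendsto 0

/-- **ℓ¹ asymptotics of the hyperbolic entropy.** For `θ ≠ 0` and `δ` with
strictly positive coordinates, `ψ_{sδ}(θ) / (½ ∑_i |θ_i| ln(1/(sδ_i))) → 1` as `s → 0⁺`. -/
theorem stmt_13 {d : ℕ} (θ : EuclideanSpace ℝ (Fin d)) (hθ : θ ≠ 0)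
    (δ : Fin d → ℝ) (hδ : ∀ i, 0 < δ i) :
    Tendsto
      (fun s : ℝ =>
        hypEntropy (fun i => s * δ i) θ /
          ((1 / 2) * ∑ i, |θ i| * Real.log (1 / (s * δ i))))
      (𝓝[>] (0 : ℝ)) (𝓝 1) := by
  have hden : Tendsto (fun s : ℝ => (1 / 2) * ∑ i, |θ i| * Real.log (1 / (s * δ i)))
      (𝓝[>] (0 : ℝ)) atTop := by
    have hS : 0 < ∑ i, |θ i| := by
      have : ∃ i, θ i ≠ 0 := by
        by_contra! h
        exact hθ (by ext i; simpa using h i)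
      obtain ⟨i, hi⟩ := this
      exact Finset.sum_pos' (fun j _ => abs_nonneg _) ⟨i, Finset.mem_univ _, abs_pos.mpr hi⟩
    have hlog : Tendsto (fun s : ℝ => -Real.log s) (𝓝[>] (0 : ℝ)) atTop :=
      tendsto_neg_atBot_atTop.comp Real.tendsto_log_nhdsGT_zero
    have h1 := (tendsto_atTop_add_const_right _ (∑ i, |θ i| * Real.log (1 / δ i))
      (hlog.const_mul_atTop hS)).const_mul_atTop (by norm_num : (0 : ℝ) < 1 / 2)
    refine h1.congr' ?_
    filter_upwards [self_mem_nhdsWithin] with s hs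
    have hs : 0 < s := hs
    congr 1
    rw [Finset.sum_mul, ← Finset.sum_add_distrib]
    refine Finset.sum_congr rfl fun i _ => ?_
    rw [one_div, one_div, Real.log_inv, Real.log_inv, Real.log_mul hs.ne' (hδ i).ne']
    ring
  have hnum := (tendsto_finsetSum Finset.univ (fun i _ => aux_lim (θ i) (δ i))).const_mul
    (1 / 4 : ℝ)
  have h2 := (hnum.div_atTop hden).const_add 1
  rw [add_zero] at h2
  refine h2.congr' ?_
  filter_upwards [self_mem_nhdsWithin, hden.eventually_gt_atTop 0] with s hs hpos
  have hs : 0 < s := hs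
  have hE : hypEntropy (fun i => s * δ i) θ =
      (1 / 2) * ∑ i, |θ i| * Real.log (1 / (s * δ i)) +
      (1 / 4) * ∑ i, (2 * (|θ i| * Real.log (2 * |θ i| +
        Real.sqrt (4 * θ i ^ 2 + (s * δ i) ^ 2)))
        - Real.sqrt (4 * θ i ^ 2 + (s * δ i) ^ 2) + s * δ i) := by
    unfold hypEntropy
    rw [Finset.mul_sum, Finset.mul_sum, Finset.mul_sum, ← Finset.sum_add_distrib]
    refine Finset.sum_congr rfl fun i _ => ?_
    have := aux_arsinh (θ i) (s * δ i) (mul_pos hs (hδ i))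
    rw [mul_assoc, this]
    ring
  rw [hE, add_div, div_self hpos.ne']
end

section
/- Let λ > 0, let g : ℝ_{≥0} → ℝ^d be continuous, and let f : ℝ_{≥0} → ℝ^d be differentiable with f(0) = 0 and λḟ(t) + f(t) + g(t) = 0 for all t ≥ 0. Then: (i) if g is bounded, so is f, with sup_{t≥0} ‖f(t)‖ ≤ sup_{t≥0} ‖g(t)‖; (ii) if each coordinate of g is absolutely integrable on (0, ∞), then ∫₀^t |f_i(s)| ds ≤ ∫₀^t |g_i(s)| ds for every coordinate i and every t ∈ [0, ∞]; (iii) under the same integrability assumption, lim_{t→∞} f(t) = 0; and (iv) under the same integrability assumption, ∫₀^∞ f(t) dt = −∫₀^∞ g(t) dt. -/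
open Real Filter MeasureTheory intervalIntegral

/-- Comparison principle for `λ f' + f + g = 0`. -/
theorem ode_compare {E : Type*} [NormedAddCommGroup E] [NormedSpace ℝ E]
    (lam : ℝ) (hlam : 0 < lam) (g f f' : ℝ → E) (hf' : ∀ t, HasDerivAt f (f' t) t)
    (hf0 : f 0 = 0) (hode : ∀ t, 0 ≤ t → lam • f' t + f t + g t = 0)
    (B B' : ℝ → ℝ) (hB : ∀ t, HasDerivAt B (B' t) t) (hB0 : 0 ≤ B 0)
    (hgB : ∀ t, 0 ≤ t → ‖g t‖ ≤ lam * B' t + B t) :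
    ∀ t, 0 ≤ t → ‖f t‖ ≤ B t := by
  intro t ht
  have he : ∀ x : ℝ, HasDerivAt (fun x => Real.exp (x / lam)) (Real.exp (x / lam) * (1 / lam)) x :=
    fun x => ((hasDerivAt_id x).div_const lam).exp
  have h1 : ∀ x, HasDerivAt (fun x => Real.exp (x / lam) • f x)
      (Real.exp (x / lam) • f' x + (Real.exp (x / lam) * (1 / lam)) • f x) x :=
    fun x => (he x).smul (hf' x)
  have h2 : ∀ x, HasDerivAt (fun x => Real.exp (x / lam) * B x)
      (Real.exp (x / lam) * (1 / lam) * B x + Real.exp (x / lam) * B' x) x :=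
    fun x => (he x).mul (hB x)
  have key := image_norm_le_of_norm_deriv_right_le_deriv_boundary
    (f := fun x => Real.exp (x / lam) • f x) (a := 0) (b := t)
    (fun x _ => (h1 x).continuousAt.continuousWithinAt)
    (fun x _ => (h1 x).hasDerivWithinAt) (by simpa [hf0] using hB0) h2 (by
      intro x hx
      have e1 : Real.exp (x / lam) • f' x + (Real.exp (x / lam) * (1 / lam)) • f x
          = (Real.exp (x / lam) * (1 / lam)) • (-g x) := by
        rw [← eq_neg_of_add_eq_zero_left (hode x hx.1), smul_add, smul_smul]
        congr 2
        field_simp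
      rw [e1, norm_smul, norm_neg, Real.norm_of_nonneg (by positivity)]
      have := mul_le_mul_of_nonneg_left (hgB x hx.1)
        (show 0 ≤ Real.exp (x / lam) * (1 / lam) by positivity)
      refine this.trans (le_of_eq ?_)
      field_simp
      ring) (Set.right_mem_Icc.2 ht)
  simp only [norm_smul, Real.norm_of_nonneg (Real.exp_pos _).le] at key
  exact le_of_mul_le_mul_left key (Real.exp_pos _)

/-- The scalar `L¹` estimate. -/
theorem scalar_L1 (lam : ℝ) (hlam : 0 < lam) (g f f' : ℝ → ℝ) (hg : Continuous g)
    (hf' : ∀ t, HasDerivAt f (f' t) t)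
    (hf0 : f 0 = 0) (hode : ∀ t, 0 ≤ t → lam • f' t + f t + g t = 0) (t : ℝ) (ht : 0 ≤ t) :
    (∫ s in (0 : ℝ)..t, |f s|) ≤ ∫ s in (0 : ℝ)..t, |g s| := by
  have hfc : Continuous f := continuous_iff_continuousAt.2 fun x => (hf' x).continuousAt
  have hkc : Continuous (fun s => Real.exp (s / lam) * (1 / lam) * |g s|) := by fun_prop
  set K : ℝ → ℝ := fun x => ∫ s in (0 : ℝ)..x, Real.exp (s / lam) * (1 / lam) * |g s| with hKdef
  have hK : ∀ x, HasDerivAt K (Real.exp (x / lam) * (1 / lam) * |g x|) x :=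
    fun x => (hkc.integral_hasStrictDerivAt 0 x).hasDerivAt
  have he : ∀ x : ℝ, HasDerivAt (fun x => Real.exp (-x / lam))
      (Real.exp (-x / lam) * (-1 / lam)) x :=
    fun x => ((hasDerivAt_id x).neg.div_const lam).exp
  set u : ℝ → ℝ := fun x => Real.exp (-x / lam) * K x with hu
  have hee : ∀ x : ℝ, Real.exp (-x / lam) * Real.exp (x / lam) = 1 := by
    intro x
    rw [← Real.exp_add, neg_div, neg_add_cancel, Real.exp_zero]
  have hud : ∀ x, HasDerivAt u ((|g x| - u x) / lam) x := by
    intro x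
    refine ((he x).mul (hK x)).congr_deriv ?_
    have e : Real.exp (-x / lam) * (Real.exp (x / lam) * (1 / lam) * |g x|)
        = (Real.exp (-x / lam) * Real.exp (x / lam)) * (|g x| / lam) := by ring
    rw [e, hee, hu]
    ring
  have huc : Continuous u := continuous_iff_continuousAt.2 fun x => (hud x).continuousAt
  have hu0 : u 0 = 0 := by simp [hu, hKdef]
  have hfu : ∀ x, 0 ≤ x → ‖f x‖ ≤ u x :=
    ode_compare lam hlam g f f' hf' hf0 hode u _ hud hu0.ge (by
      intro x _
      rw [mul_div_cancel₀ _ hlam.ne', Real.norm_eq_abs]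
      linarith)
  have hga : Continuous fun s => |g s| := hg.abs
  have h1 : ∫ s in (0 : ℝ)..t, (|g s| - u s) / lam = u t - u 0 :=
    integral_eq_sub_of_hasDerivAt (fun x _ => hud x)
      (((hga.sub huc).div_const lam).intervalIntegrable _ _)
  rw [intervalIntegral.integral_div, intervalIntegral.integral_sub (hga.intervalIntegrable _ _)
    (huc.intervalIntegrable _ _), hu0, sub_zero, div_eq_iff hlam.ne'] at h1
  have h2 : (∫ s in (0 : ℝ)..t, |f s|) ≤ ∫ s in (0 : ℝ)..t, u s :=
    intervalIntegral.integral_mono_on ht (hfc.abs.intervalIntegrable _ _)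
      (huc.intervalIntegrable _ _) (fun x hx => hfu x hx.1)
  have h3 : 0 ≤ u t * lam := mul_nonneg ((norm_nonneg _).trans (hfu t ht)) hlam.le
  linarith

/-- Let `λ > 0`, `g` continuous, `f` differentiable with `f(0) = 0` and
`λḟ + f + g = 0` on `t ≥ 0`. Then: (i) if `g` is bounded then so is `f`, with
`sup ‖f‖ ≤ sup ‖g‖`; and if each coordinate of `g` is absolutely integrable on `(0, ∞)` then
(ii) each coordinate of `f` is integrable with `∫₀^t |f_i| ≤ ∫₀^t |g_i|` for every
`t ∈ [0, ∞]`, (iii) `f(t) → 0` as `t → ∞`, and (iv) `∫₀^∞ f = −∫₀^∞ g`. -/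
theorem stmt_15 {d : ℕ} (lam : ℝ) (hlam : 0 < lam)
    (g : ℝ → EuclideanSpace ℝ (Fin d)) (hg : Continuous g)
    (f f' : ℝ → EuclideanSpace ℝ (Fin d)) (hf' : ∀ t, HasDerivAt f (f' t) t)
    (hf0 : f 0 = 0)
    (hode : ∀ t, 0 ≤ t → lam • f' t + f t + g t = 0) :
    -- (i) boundedness transfer with the same bound
    (∀ C : ℝ, (∀ t, 0 ≤ t → ‖g t‖ ≤ C) → ∀ t, 0 ≤ t → ‖f t‖ ≤ C) ∧
      ((∀ i, IntegrableOn (fun t => g t i) (Set.Ioi (0 : ℝ))) →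
        -- (ii) coordinatewise L¹ bounds, for every finite t and for t = ∞
        (∀ i, IntegrableOn (fun t => f t i) (Set.Ioi (0 : ℝ)) ∧
            (∀ t, 0 ≤ t →
              (∫ s in (0 : ℝ)..t, |f s i|) ≤ ∫ s in (0 : ℝ)..t, |g s i|) ∧
            (∫ t in Set.Ioi (0 : ℝ), |f t i|) ≤ ∫ t in Set.Ioi (0 : ℝ), |g t i|) ∧
          -- (iii) f vanishes at infinity
          Tendsto f atTop (nhds (0 : EuclideanSpace ℝ (Fin d))) ∧
          -- (iv) the integrals of f and g over (0, ∞) are opposite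
          (∫ t in Set.Ioi (0 : ℝ), f t) = -∫ t in Set.Ioi (0 : ℝ), g t) := by
  have hfc : Continuous f := continuous_iff_continuousAt.2 fun x => (hf' x).continuousAt
  refine ⟨fun C hC => ?_, fun hgi => ?_⟩
  · exact ode_compare lam hlam g f f' hf' hf0 hode (fun _ => C) (fun _ => 0)
      (fun t => hasDerivAt_const t C) ((norm_nonneg _).trans (hC 0 le_rfl))
      (fun t ht => by simpa using hC t ht)
  have hfic : ∀ i, Continuous fun t => f t i := fun i => by fun_prop
  have hb : ∀ i, ∀ t, 0 ≤ t →
      (∫ s in (0 : ℝ)..t, |f s i|) ≤ ∫ s in (0 : ℝ)..t, |g s i| := by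
    intro i
    refine scalar_L1 lam hlam (fun t => g t i) (fun t => f t i) (fun t => f' t i)
      (by fun_prop) (fun t => ?_) (by simp [hf0]) (fun t ht => ?_)
    · exact ((EuclideanSpace.proj i : EuclideanSpace ℝ (Fin d) →L[ℝ] ℝ).hasFDerivAt.comp_hasDerivAt
        t (hf' t))
    · simpa using congrArg (fun v : EuclideanSpace ℝ (Fin d) => v i) (hode t ht)
  have hgt : ∀ i, Tendsto (fun t : ℝ => ∫ s in (0 : ℝ)..t, |g s i|) atTop
      (nhds (∫ s in Set.Ioi (0 : ℝ), |g s i|)) := fun i =>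
    intervalIntegral_tendsto_integral_Ioi 0 (hgi i).abs tendsto_id
  have hle : ∀ i, ∀ t : ℝ, 0 ≤ t →
      (∫ s in (0 : ℝ)..t, |f s i|) ≤ ∫ s in Set.Ioi (0 : ℝ), |g s i| := by
    intro i t ht
    refine (hb i t ht).trans ?_
    rw [intervalIntegral.integral_of_le ht]
    exact setIntegral_mono_set (hgi i).abs (Eventually.of_forall fun _ => abs_nonneg _)
      Set.Ioc_subset_Ioi_self.eventuallyLE
  have hfi : ∀ i, IntegrableOn (fun t => f t i) (Set.Ioi (0 : ℝ)) := by
    intro i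
    refine integrableOn_Ioi_of_intervalIntegral_norm_bounded (l := atTop) (b := id)
      (∫ s in Set.Ioi (0 : ℝ), |g s i|) 0 (fun t => ?_) tendsto_id ?_
    · exact ((hfic i).integrableOn_Icc).mono_set Set.Ioc_subset_Icc_self
    · filter_upwards [eventually_ge_atTop 0] with t ht
      exact hle i t ht
  have hF : IntegrableOn f (Set.Ioi (0 : ℝ)) := Integrable.of_eval_piLp hfi
  have hG : IntegrableOn g (Set.Ioi (0 : ℝ)) := Integrable.of_eval_piLp hgi
  have hd : ∀ t ∈ Set.Ioi (0 : ℝ), (-(1 / lam)) • (f t + g t) = f' t := by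
    intro t ht
    have h := hode t (le_of_lt ht)
    rw [add_assoc] at h
    rw [eq_neg_of_add_eq_zero_right h, smul_neg, neg_smul, neg_neg, smul_smul,
      one_div_mul_cancel hlam.ne', one_smul]
  have hF' : IntegrableOn f' (Set.Ioi (0 : ℝ)) :=
    IntegrableOn.congr_fun ((hF.add hG).smul (-(1 / lam))) hd measurableSet_Ioi
  have hT : Tendsto f atTop (nhds (0 : EuclideanSpace ℝ (Fin d))) :=
    tendsto_zero_of_hasDerivAt_of_integrableOn_Ioi (fun x _ => hf' x) hF' hF
  refine ⟨fun i => ⟨hfi i, hb i, ?_⟩, hT, ?_⟩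
  · refine le_of_tendsto (intervalIntegral_tendsto_integral_Ioi 0 (hfi i).abs tendsto_id) ?_
    filter_upwards [eventually_ge_atTop 0] with t ht
    exact hle i t ht
  · have h0 := integral_Ioi_of_hasDerivAt_of_tendsto' (fun x _ => hf' x) hF' hT
    rw [hf0, sub_zero, ← setIntegral_congr_fun measurableSet_Ioi hd, MeasureTheory.integral_smul,
      MeasureTheory.integral_add hF hG] at h0
    have hl : -(1 / lam) ≠ 0 := neg_ne_zero.2 (one_div_ne_zero hlam.ne')
    exact eq_neg_of_add_eq_zero_left ((smul_eq_zero.1 h0).resolve_left hl)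
end

section
/- Consider full-batch momentum gradient descent on the 2-layer diagonal linear network with step size γ > 0 and momentum β ∈ [0,1), and assume every coordinate of every iterate w_{±,k} is nonzero. For m ≥ 1, define Q_{±,m} = r(w_{±,m+1}/w_{±,m}) + β·r(w_{±,m−1}/w_{±,m}) coordinatewise (with w_{±,1} = w_{±,0}). Then for every N ≥ 1, coordinatewise: |w_{±,N+1}| = |w_{±,0}| ⊙ exp( −(1/(1−β)) Σ_{m=1}^N (1 − β^{N+1−m})·Q_{±,m} ) ⊙ exp( ∓(γ/(1−β)) Σ_{m=1}^N (1 − β^{N+1−m})·∇L(θ_m) ). -/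
open Real Finset

open scoped RealInnerProductSpace

/-- `r(z) = (z − 1) − ln|z|` for `z ≠ 0`. -/
noncomputable def rfun (z : ℝ) : ℝ := (z - 1) - Real.log |z|

/-- Summation of the first-order recursion satisfied by the increments of `l`. -/
lemma sum_rec (β : ℝ) (l a : ℕ → ℝ) (h1 : l 1 = l 0)
    (hrec : ∀ m, l (m + 2) - l (m + 1) = β * (l (m + 1) - l m) - a (m + 1)) (N : ℕ) :
    β * (l (N + 1) - l N) = -∑ m ∈ Finset.Icc 1 N, β ^ (N + 1 - m) * a m ∧
    (1 - β) * (l (N + 1) - l 0) = -∑ m ∈ Finset.Icc 1 N, (1 - β ^ (N + 1 - m)) * a m := by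
  have hS : ∀ N, ∑ m ∈ Finset.Icc 1 N, (1 - β ^ (N + 1 - m)) * a m =
      ∑ m ∈ Finset.Icc 1 N, a m - ∑ m ∈ Finset.Icc 1 N, β ^ (N + 1 - m) * a m := by
    intro N
    rw [← Finset.sum_sub_distrib]
    exact Finset.sum_congr rfl fun m _ => by ring
  have hT : ∀ N, ∑ m ∈ Finset.Icc 1 (N + 1), β ^ (N + 1 + 1 - m) * a m =
      β * ∑ m ∈ Finset.Icc 1 N, β ^ (N + 1 - m) * a m + β * a (N + 1) := by
    intro N
    rw [Finset.sum_Icc_succ_top (by omega), Finset.mul_sum]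
    congr 1
    · refine Finset.sum_congr rfl fun m hm => ?_
      rw [Finset.mem_Icc] at hm
      have : N + 1 + 1 - m = (N + 1 - m) + 1 := by omega
      rw [this]; ring
    · have : N + 1 + 1 - (N + 1) = 1 := by omega
      rw [this, pow_one]
  simp only [hS]
  induction N with
  | zero => simp [h1]
  | succ N ih =>
    obtain ⟨i1, i2⟩ := ih
    rw [hT, Finset.sum_Icc_succ_top (by omega)]
    have h := hrec N
    have e : l (N + 1 + 1) = l (N + 1) + β * (l (N + 1) - l N) - a (N + 1) := by linarith
    constructor
    · rw [e]; linear_combination β * i1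
    · rw [e]; linear_combination i2 + (1 - β) * i1

/-- The scalar version of the result. -/
lemma scalar_version (β c : ℝ) (hβ1 : β < 1) (w g Q : ℕ → ℝ) (h1 : w 1 = w 0)
    (hnz : ∀ k, w k ≠ 0)
    (hrec : ∀ k, w (k + 2) = w (k + 1) - c * g (k + 1) * w (k + 1) + β * (w (k + 1) - w k))
    (hQ : ∀ m, Q m = rfun (w (m + 1) / w m) + β * rfun (w (m - 1) / w m)) (N : ℕ) :
    |w (N + 1)| = |w 0| *
      Real.exp (-(1 / (1 - β)) * ∑ m ∈ Finset.Icc 1 N, (1 - β ^ (N + 1 - m)) * Q m) *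
      Real.exp (-(c / (1 - β)) * ∑ m ∈ Finset.Icc 1 N, (1 - β ^ (N + 1 - m)) * g m) := by
  have hb : (1 - β) ≠ 0 := by linarith
  have key := (sum_rec β (fun m => Real.log (w m)) (fun m => Q m + c * g m)
    (by simp only [h1]) (by
      intro m
      simp only [hQ, rfun, Real.log_abs, Nat.add_sub_cancel]
      rw [Real.log_div (hnz _) (hnz _), Real.log_div (hnz _) (hnz _)]
      have hd : w (m + 1 + 1) / w (m + 1) - 1 + β * (w m / w (m + 1) - 1) = - (c * g (m + 1)) := by
        have := hnz (m + 1)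
        have h2 := hrec m
        field_simp
        linear_combination h2
      linear_combination hd) N).2
  have hs : ∑ m ∈ Finset.Icc 1 N, (1 - β ^ (N + 1 - m)) * (Q m + c * g m) =
      ∑ m ∈ Finset.Icc 1 N, (1 - β ^ (N + 1 - m)) * Q m +
      c * ∑ m ∈ Finset.Icc 1 N, (1 - β ^ (N + 1 - m)) * g m := by
    rw [Finset.mul_sum, ← Finset.sum_add_distrib]
    exact Finset.sum_congr rfl fun m _ => by ring
  simp only [hs] at key
  rw [← Real.exp_log_eq_abs (hnz (N + 1)), ← Real.exp_log_eq_abs (hnz 0), ← Real.exp_add,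
    ← Real.exp_add]
  congr 1
  field_simp
  linear_combination key

/-- For full-batch MGD on the 2-layer diagonal linear network with all
coordinates of all iterates `w_{±,k}` nonzero, with
`Q_{±,m} = r(w_{±,m+1}/w_{±,m}) + β·r(w_{±,m−1}/w_{±,m})`, for every `N ≥ 1`,
`|w_{±,N+1}| = |w_{±,0}| ⊙ exp(−(1/(1−β)) ∑_{m=1}^N (1−β^{N+1−m})Q_{±,m})
⊙ exp(∓(γ/(1−β)) ∑_{m=1}^N (1−β^{N+1−m})∇L(θ_m))`. -/
theorem stmt_16 {n d : ℕ}
    (x : Fin n → EuclideanSpace ℝ (Fin d)) (y : Fin n → ℝ)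
    (L : EuclideanSpace ℝ (Fin d) → ℝ)
    (hL : L = fun θ => (1 / (2 * (n : ℝ))) * ∑ i, (y i - ⟪x i, θ⟫) ^ 2)
    (γ β : ℝ) (hγ : 0 < γ) (hβ0 : 0 ≤ β) (hβ1 : β < 1)
    (u v : ℕ → EuclideanSpace ℝ (Fin d))
    (θ : ℕ → EuclideanSpace ℝ (Fin d)) (hθ : ∀ k i, θ k i = u k i * v k i)
    (h1u : u 1 = u 0) (h1v : v 1 = v 0)
    (hrecu : ∀ k, 1 ≤ k → ∀ i,
      u (k + 1) i = u k i - γ * (gradient L (θ k) i * v k i) + β * (u k i - u (k - 1) i))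
    (hrecv : ∀ k, 1 ≤ k → ∀ i,
      v (k + 1) i = v k i - γ * (gradient L (θ k) i * u k i) + β * (v k i - v (k - 1) i))
    -- every coordinate of every iterate w_{±,k} is nonzero
    (hnz : ∀ k i, u k i + v k i ≠ 0 ∧ u k i - v k i ≠ 0)
    -- the quantities Q_{±,m}
    (Qp Qm : ℕ → Fin d → ℝ)
    (hQp : ∀ m i, Qp m i =
      rfun ((u (m + 1) i + v (m + 1) i) / (u m i + v m i)) +
        β * rfun ((u (m - 1) i + v (m - 1) i) / (u m i + v m i)))
    (hQm : ∀ m i, Qm m i =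
      rfun ((u (m + 1) i - v (m + 1) i) / (u m i - v m i)) +
        β * rfun ((u (m - 1) i - v (m - 1) i) / (u m i - v m i))) :
    ∀ N, 1 ≤ N → ∀ i,
      (|u (N + 1) i + v (N + 1) i| =
          |u 0 i + v 0 i| *
            Real.exp (-(1 / (1 - β)) *
              ∑ m ∈ Finset.Icc 1 N, (1 - β ^ (N + 1 - m)) * Qp m i) *
            Real.exp (-(γ / (1 - β)) *
              ∑ m ∈ Finset.Icc 1 N, (1 - β ^ (N + 1 - m)) * gradient L (θ m) i)) ∧
        (|u (N + 1) i - v (N + 1) i| =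
          |u 0 i - v 0 i| *
            Real.exp (-(1 / (1 - β)) *
              ∑ m ∈ Finset.Icc 1 N, (1 - β ^ (N + 1 - m)) * Qm m i) *
            Real.exp ((γ / (1 - β)) *
              ∑ m ∈ Finset.Icc 1 N, (1 - β ^ (N + 1 - m)) * gradient L (θ m) i)) := by
  intro N _ i
  constructor
  · refine scalar_version β γ hβ1 (fun k => u k i + v k i) (fun k => gradient L (θ k) i)
      (fun k => Qp k i) (by simp only [h1u, h1v]) (fun k => (hnz k i).1) ?_ (fun m => hQp m i) N
    intro k
    have hu := hrecu (k + 1) (by omega) i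
    have hv := hrecv (k + 1) (by omega) i
    simp only [Nat.add_sub_cancel] at hu hv
    linear_combination hu + hv
  · have h := scalar_version β (-γ) hβ1 (fun k => u k i - v k i) (fun k => gradient L (θ k) i)
      (fun k => Qm k i) (by simp only [h1u, h1v]) (fun k => (hnz k i).2) (by
        intro k
        have hu := hrecu (k + 1) (by omega) i
        have hv := hrecv (k + 1) (by omega) i
        simp only [Nat.add_sub_cancel] at hu hv
        linear_combination hu - hv) (fun m => hQm m i) N
    rwa [neg_div, neg_neg] at h
end

section
/- Consider full-batch momentum gradient descent on the 2-layer diagonal linear network with step size γ > 0 and momentum β ∈ [0,1). Assume every coordinate of every iterate w_{±,k} is nonzero, that (u_k, v_k) converges to (u_∞, v_∞) as k → ∞, and that Δ_∞ = |u_∞² − v_∞²| has strictly positive coordinates. Then the series S_± := (1/(1−β)) Σ_{k=1}^∞ [ r(w_{±,k+1}/w_{±,k}) + β·r(w_{±,k}/w_{±,k+1}) ] converge coordinatewise to finite vectors in ℝ^d. -/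
open Real Filter Finset

open scoped RealInnerProductSpace

lemma aux_conv (p q : ℕ → ℝ) (hp : ∀ᶠ k in atTop, 0 ≤ p k) (hq : ∀ᶠ k in atTop, 0 ≤ q k)
    (l : ℝ) (h : Tendsto (fun N => ∑ k ∈ Finset.Icc 1 N, (p k + q k)) atTop (nhds l)) :
    ∃ S : ℝ, Tendsto (fun N => ∑ k ∈ Finset.Icc 1 N, p k) atTop (nhds S) := by
  obtain ⟨K, hK⟩ := eventually_atTop.1 (hp.and hq)
  obtain ⟨C, hC⟩ := h.bddAbove_range
  have hmono : Monotone (fun N => ∑ k ∈ Finset.Icc 1 (N + K), p k) := by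
    refine monotone_nat_of_le_succ fun N => ?_
    have e : N + 1 + K = (N + K) + 1 := by omega
    rw [e, Finset.sum_Icc_succ_top (by omega)]
    have := (hK (N + K + 1) (by omega)).1
    linarith
  have hmonoq : Monotone (fun N => ∑ k ∈ Finset.Icc 1 (N + K), q k) := by
    refine monotone_nat_of_le_succ fun N => ?_
    have e : N + 1 + K = (N + K) + 1 := by omega
    rw [e, Finset.sum_Icc_succ_top (by omega)]
    have := (hK (N + K + 1) (by omega)).2
    linarith
  have hb : BddAbove (Set.range (fun N => ∑ k ∈ Finset.Icc 1 (N + K), p k)) := by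
    refine ⟨C - ∑ k ∈ Finset.Icc 1 (0 + K), q k, ?_⟩
    rintro _ ⟨N, rfl⟩
    have h1 := hC ⟨N + K, rfl⟩
    have h2 := hmonoq (Nat.zero_le N)
    simp only [Finset.sum_add_distrib] at h1 h2 ⊢
    linarith
  exact ⟨_, (tendsto_add_atTop_iff_nat (f := fun N => ∑ k ∈ Finset.Icc 1 N, p k) K).1
    (tendsto_atTop_ciSup hmono hb)⟩

/-- The telescoping potential. -/
noncomputable def Fpot (β : ℝ) (w : ℕ → ℝ) (k : ℕ) : ℝ :=
  β * ((w k - w (k - 1)) / w k) + (1 - β) * Real.log |w k|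

lemma term_eq (β c : ℝ) (w : ℕ → ℝ) (hw : ∀ k, w k ≠ 0) (k : ℕ)
    (hrec : w (k + 1) = w k + c * w k + β * (w k - w (k - 1))) :
    rfun (w (k + 1) / w k) + β * rfun (w k / w (k + 1)) =
      c + Fpot β w k - Fpot β w (k + 1) := by
  have h0 := hw k
  have h1 := hw (k + 1)
  have hc : c = (w (k + 1) - w k) / w k - β * ((w k - w (k - 1)) / w k) := by
    rw [hrec]; field_simp; ring
  rw [hc]
  simp only [rfun, Fpot, abs_div, Nat.add_sub_cancel]
  rw [Real.log_div (abs_ne_zero.2 h1) (abs_ne_zero.2 h0),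
    Real.log_div (abs_ne_zero.2 h0) (abs_ne_zero.2 h1)]
  field_simp
  ring

lemma Fpot_tendsto (β : ℝ) (w : ℕ → ℝ) (l : ℝ) (hl : l ≠ 0) (h : Tendsto w atTop (nhds l)) :
    Tendsto (Fpot β w) atTop (nhds (β * ((l - l) / l) + (1 - β) * Real.log |l|)) := by
  have h1 : Tendsto (fun k => w (k - 1)) atTop (nhds l) := h.comp (tendsto_sub_atTop_nat 1)
  exact (((h.sub h1).div h hl).const_mul β).add ((h.abs.log (abs_ne_zero.2 hl)).const_mul (1 - β))

lemma rfun_nonneg {z : ℝ} (hz : 0 < z) : 0 ≤ rfun z := by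
  have := Real.log_le_sub_one_of_pos hz
  rw [rfun, abs_of_pos hz]; linarith

lemma term_nonneg (β : ℝ) (hβ : 0 ≤ β) (w : ℕ → ℝ) (l : ℝ) (hl : l ≠ 0)
    (h : Tendsto w atTop (nhds l)) :
    ∀ᶠ k in atTop, 0 ≤ rfun (w (k + 1) / w k) + β * rfun (w k / w (k + 1)) := by
  have h1 : Tendsto (fun k => w (k + 1)) atTop (nhds l) := (tendsto_add_atTop_iff_nat 1).2 h
  have h2 := h1.div h hl
  rw [div_self hl] at h2
  filter_upwards [h2.eventually (lt_mem_nhds one_pos)] with k hk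
  have hk : 0 < w (k + 1) / w k := hk
  have hk' : 0 < w k / w (k + 1) := by rw [← inv_div]; exact inv_pos.2 hk
  have := rfun_nonneg hk
  have := mul_nonneg hβ (rfun_nonneg hk')
  linarith

lemma main_aux (β : ℝ) (hβ : 0 ≤ β) (w z c : ℕ → ℝ) (hw : ∀ k, w k ≠ 0) (hz : ∀ k, z k ≠ 0)
    (hrw : ∀ k, 1 ≤ k → w (k + 1) = w k + c k * w k + β * (w k - w (k - 1)))
    (hrz : ∀ k, 1 ≤ k → z (k + 1) = z k + (-c k) * z k + β * (z k - z (k - 1)))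
    (l m : ℝ) (hl : l ≠ 0) (hm : m ≠ 0)
    (h : Tendsto w atTop (nhds l)) (h' : Tendsto z atTop (nhds m)) :
    ∃ S : ℝ, Tendsto (fun N => (1 / (1 - β)) * ∑ k ∈ Finset.Icc 1 N,
      (rfun (w (k + 1) / w k) + β * rfun (w k / w (k + 1)))) atTop (nhds S) := by
  have hsum : ∀ N, ∑ k ∈ Finset.Icc 1 N,
      ((rfun (w (k + 1) / w k) + β * rfun (w k / w (k + 1))) +
        (rfun (z (k + 1) / z k) + β * rfun (z k / z (k + 1)))) =
      (Fpot β w 1 + Fpot β z 1) - (Fpot β w (N + 1) + Fpot β z (N + 1)) := by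
    intro N
    induction N with
    | zero => simp
    | succ N ih =>
      rw [Finset.sum_Icc_succ_top (by omega), ih,
        term_eq β _ w hw (N + 1) (hrw (N + 1) (by omega)),
        term_eq β _ z hz (N + 1) (hrz (N + 1) (by omega))]
      ring
  have ht := ((tendsto_add_atTop_iff_nat 1).2
    ((Fpot_tendsto β w l hl h).add (Fpot_tendsto β z m hm h'))).const_sub
      (Fpot β w 1 + Fpot β z 1)
  obtain ⟨S, hS⟩ := aux_conv _ _ (term_nonneg β hβ w l hl h) (term_nonneg β hβ z m hm h') _
    (ht.congr fun N => (hsum N).symm)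
  exact ⟨_, hS.const_mul _⟩

/-- For full-batch MGD on the 2-layer diagonal linear network, if every
coordinate of every iterate `w_{±,k}` is nonzero, `(u_k, v_k)` converges, and the asymptotic
balancedness has strictly positive coordinates, then the series
`S_± = (1/(1−β)) ∑_{k=1}^∞ [r(w_{±,k+1}/w_{±,k}) + β·r(w_{±,k}/w_{±,k+1})]`
converge coordinatewise to finite values. -/
theorem stmt_17 {n d : ℕ}
    (x : Fin n → EuclideanSpace ℝ (Fin d)) (y : Fin n → ℝ)
    (L : EuclideanSpace ℝ (Fin d) → ℝ)
    (hL : L = fun θ => (1 / (2 * (n : ℝ))) * ∑ i, (y i - ⟪x i, θ⟫) ^ 2)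
    (γ β : ℝ) (hγ : 0 < γ) (hβ0 : 0 ≤ β) (hβ1 : β < 1)
    (u v : ℕ → EuclideanSpace ℝ (Fin d))
    (θ : ℕ → EuclideanSpace ℝ (Fin d)) (hθ : ∀ k i, θ k i = u k i * v k i)
    (h1u : u 1 = u 0) (h1v : v 1 = v 0)
    (hrecu : ∀ k, 1 ≤ k → ∀ i,
      u (k + 1) i = u k i - γ * (gradient L (θ k) i * v k i) + β * (u k i - u (k - 1) i))
    (hrecv : ∀ k, 1 ≤ k → ∀ i,
      v (k + 1) i = v k i - γ * (gradient L (θ k) i * u k i) + β * (v k i - v (k - 1) i))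
    (hnz : ∀ k i, u k i + v k i ≠ 0 ∧ u k i - v k i ≠ 0)
    (ulim vlim : EuclideanSpace ℝ (Fin d))
    (hu : Tendsto u atTop (nhds ulim)) (hv : Tendsto v atTop (nhds vlim))
    (hDinf : ∀ i, 0 < |ulim i ^ 2 - vlim i ^ 2|) :
    ∀ i,
      (∃ Sp : ℝ,
        Tendsto
          (fun N => (1 / (1 - β)) *
            ∑ k ∈ Finset.Icc 1 N,
              (rfun ((u (k + 1) i + v (k + 1) i) / (u k i + v k i)) +
                β * rfun ((u k i + v k i) / (u (k + 1) i + v (k + 1) i))))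
          atTop (nhds Sp)) ∧
      (∃ Sm : ℝ,
        Tendsto
          (fun N => (1 / (1 - β)) *
            ∑ k ∈ Finset.Icc 1 N,
              (rfun ((u (k + 1) i - v (k + 1) i) / (u k i - v k i)) +
                β * rfun ((u k i - v k i) / (u (k + 1) i - v (k + 1) i))))
          atTop (nhds Sm)) := by
  intro i
  have hui : Tendsto (fun k => u k i) atTop (nhds (ulim i)) :=
    ((EuclideanSpace.proj (𝕜 := ℝ) i).continuous.tendsto ulim).comp hu
  have hvi : Tendsto (fun k => v k i) atTop (nhds (vlim i)) :=
    ((EuclideanSpace.proj (𝕜 := ℝ) i).continuous.tendsto vlim).comp hv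
  have hD : (ulim i + vlim i) * (ulim i - vlim i) ≠ 0 := by
    have := abs_pos.1 (hDinf i)
    intro h; apply this; linarith
  have hp := left_ne_zero_of_mul hD
  have hm := right_ne_zero_of_mul hD
  constructor
  · refine main_aux β hβ0 (fun k => u k i + v k i) (fun k => u k i - v k i)
      (fun k => -(γ * gradient L (θ k) i)) (fun k => (hnz k i).1) (fun k => (hnz k i).2)
      ?_ ?_ _ _ hp hm (hui.add hvi) (hui.sub hvi)
    · intro k hk
      simp only [hrecu k hk i, hrecv k hk i]; ring
    · intro k hk
      simp only [hrecu k hk i, hrecv k hk i]; ring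
  · refine main_aux β hβ0 (fun k => u k i - v k i) (fun k => u k i + v k i)
      (fun k => γ * gradient L (θ k) i) (fun k => (hnz k i).2) (fun k => (hnz k i).1)
      ?_ ?_ _ _ hm hp (hui.sub hvi) (hui.add hvi)
    · intro k hk
      simp only [hrecu k hk i, hrecv k hk i]; ring
    · intro k hk
      simp only [hrecu k hk i, hrecv k hk i]; ring
end
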